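/- Let d = 2, let B be a fixed real 2×2 matrix, let r > 0 and let Q = (0,1)² be the open unit square. Let 𝒰_r := 𝒱_r^lc be the lamination convex hull (with respect to the wave cone Λ) of the set 𝒱_r defined in complex coordinates by 𝒱_r := {(z e^{iθ}, c e^{2iθ}) : f_r(z, c) < 1, 0 < |c| < r/2, θ ∈ ℝ}, where f_r(a + ib, c) = √r·|a|/(r/2 + c) + √r·|b|/(r/2 − c). Then: (i) there exists a strictly increasing function Φ : [0,∞) → [0,∞) with Φ(0) = 0 such that for every w̄ = (v̄, Ū) ∈ 𝒰_r there exist w = (v, U) ∈ C_c^∞(Q; ℝ² × S₀^{2×2}) and q ∈ C_c^∞(Q) with div U + ∇q = Bv and div v = 0 on ℝ², satisfying w̄ + w(x) ∈ 𝒰_r for all x ∈ Q, ∫_Q |w(x)|² dx ≥ Φ(dist(w̄, K_r)), and ∫_Q w(x) dx = 0; (ii) K_r ⊂ 𝒰_{r'} whenever 0 < r < r'. -/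

import Mathlib

open MeasureTheory

noncomputable section

/-- Vectors in ℝ^d. -/
abbrev Vec (d : ℕ) := Fin d → ℝ

/-- Matrices (as functions). -/
abbrev Mat (d : ℕ) := Fin d → Fin d → ℝ

/-- The space S₀^{d×d} of symmetric trace-free d×d matrices, as a submodule. -/
def S0 (d : ℕ) : Submodule ℝ (Mat d) where
  carrier := {U | (∀ i j, U i j = U j i) ∧ ∑ i, U i i = 0}
  add_mem' := by
    rintro U V ⟨hU1, hU2⟩ ⟨hV1, hV2⟩
    refine ⟨fun i j => by simp [hU1 i j, hV1 i j], ?_⟩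
    simp [Finset.sum_add_distrib, hU2, hV2]
  zero_mem' := ⟨fun i j => rfl, by simp⟩
  smul_mem' := by
    rintro c U ⟨hU1, hU2⟩
    refine ⟨fun i j => by simp [hU1 i j], ?_⟩
    simp [← Finset.mul_sum, hU2]

/-- Partial derivative ∂ᵢ of a scalar function. -/
def pd {d : ℕ} (i : Fin d) (f : Vec d → ℝ) (x : Vec d) : ℝ :=
  fderiv ℝ f x (Pi.single i 1)

/-- The wave cone Λ: states `(v̄, Ū)` with `v̄ ≠ 0` for which there are `q̄ ∈ ℝ` and
`ξ ≠ 0` with `Ū ξ + q̄ ξ = 0` and `v̄ · ξ = 0`. -/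
def Lam (d : ℕ) : Set (Vec d × S0 d) :=
  {w | w.1 ≠ 0 ∧ ∃ (q : ℝ) (ξ : Vec d), ξ ≠ 0 ∧
    (∀ i, (∑ j, (w.2 : Mat d) i j * ξ j) + q * ξ i = 0) ∧ (∑ i, w.1 i * ξ i = 0)}

/-- The constraint set `K_r = {(v, U) : U = v ⊗ v − (r/d)·I_d}` inside ℝ^d × S₀^{d×d}.
(Note that trace-freeness of `U` forces `|v|² = r` on `K_r`.) -/
def Kset (d : ℕ) (r : ℝ) : Set (Vec d × S0 d) :=
  {w | ∀ i j, (w.2 : Mat d) i j = w.1 i * w.1 j - (r / d) * (if i = j then 1 else 0)}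

/-- The function `f_r(a + ib, c) = √r·|a|/(r/2 + c) + √r·|b|/(r/2 − c)`. -/
def fr (r : ℝ) (z : ℂ) (c : ℝ) : ℝ :=
  Real.sqrt r * |z.re| / (r / 2 + c) + Real.sqrt r * |z.im| / (r / 2 - c)

/-- The set `𝒱_r = {(z e^{iθ}, c e^{2iθ}) : f_r(z, c) < 1, 0 < |c| < r/2, θ ∈ ℝ}`
in the complex coordinates `(z, ζ) ∈ ℂ × ℂ`. -/
def Vset (r : ℝ) : Set (ℂ × ℂ) :=
  {p | ∃ (z : ℂ) (c θ : ℝ), fr r z c < 1 ∧ 0 < |c| ∧ |c| < r / 2 ∧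
    p = (z * Complex.exp (θ * Complex.I), (c : ℂ) * Complex.exp (2 * θ * Complex.I))}

/-- The wave cone in complex coordinates: `Λ = {(z, ζ) : z ≠ 0, Im(z²·conj ζ) = 0}`. -/
def cLam : Set (ℂ × ℂ) := {p | p.1 ≠ 0 ∧ (p.1 ^ 2 * (starRingEnd ℂ) p.2).im = 0}

/-- The iterates `𝒰^{(i)}` of the lamination convex hull construction with respect to a
cone `L`: `𝒰^{(0)} = S` and
`𝒰^{(i+1)} = 𝒰^{(i)} ∪ {tξ + (1−t)ξ' : ξ, ξ' ∈ 𝒰^{(i)}, ξ − ξ' ∈ L, t ∈ [0,1]}`. -/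
def lamIter (L S : Set (ℂ × ℂ)) : ℕ → Set (ℂ × ℂ)
  | 0 => S
  | (i + 1) => lamIter L S i ∪
      {p | ∃ ξ ξ' : ℂ × ℂ, ∃ t : ℝ, ξ ∈ lamIter L S i ∧ ξ' ∈ lamIter L S i ∧
        ξ - ξ' ∈ L ∧ t ∈ Set.Icc (0 : ℝ) 1 ∧ p = t • ξ + (1 - t) • ξ'}

/-- The lamination convex hull `S^lc = ∪_i 𝒰^{(i)}` with respect to the cone `L`. -/
def lamHull (L S : Set (ℂ × ℂ)) : Set (ℂ × ℂ) := ⋃ i, lamIter L S i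

/-- The identification of `ℝ² × S₀^{2×2}` with `ℂ × ℂ`:
`z = v₁ + i v₂`, `ζ = U₁₁ + i U₁₂`. -/
def toC (w : Vec 2 × S0 2) : ℂ × ℂ :=
  (((w.1 0 : ℝ) : ℂ) + ((w.1 1 : ℝ) : ℂ) * Complex.I,
   (((w.2 : Mat 2) 0 0 : ℝ) : ℂ) + (((w.2 : Mat 2) 0 1 : ℝ) : ℂ) * Complex.I)

/-- The relaxed set `𝒰_r = 𝒱_r^lc`, read back in the real coordinates
`ℝ² × S₀^{2×2}` via the identification `toC`. -/
def Uset (r : ℝ) : Set (Vec 2 × S0 2) := {w | toC w ∈ lamHull cLam (Vset r)}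

/-- The open unit square Q = (0,1)². -/
def unitSquare : Set (Vec 2) := {x | ∀ i, x i ∈ Set.Ioo (0 : ℝ) 1}

/-
A high-frequency plane wave in a direction of the wave cone, whose profile is almost everywhere
close to the two ends of a segment, perturbs a point of the segment so that it oscillates between
the endpoints. To solve the equations exactly with compact support, the wave is put on potentials:
`v = ∇^⊥ Δφ`, `U` is the sum of a second-order expression in `χ` that is a pure gradient under `div`
and of a second-order expression in `φ` that compensates `B v` and vanishes as the frequency grows.
Rescaled copies can be placed in the cells of a fine grid, so the points that admit perturbations
inside `𝒰_r` with `dist(·, K_r)` small in mean form a lamination convex set. The corners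
`(2h/√r, h)`, `h ↑ r/2`, of the sections of `𝒱_r` converge to `K_r`, and any lamination convex set
that contains them together with their rotations contains `𝒱_r`, hence every point of `𝒰_r` is of
this kind. As the distance is 1-Lipschitz, such a perturbation has energy at least
`dist(w̄, K_r)² / 2`.
-/

namespace ConvexIntegration

open TopologicalSpace LineDeriv Metric Set Filter Asymptotics
open scoped Distributions ContDiff Topology

section TestFunctions

lemma hasCompactSupport_and_tsupport_subset_pi {X ι F : Type*} [TopologicalSpace X] [Finite ι]
    [Zero F] {Ω : Set X} {f : X → ι → F}
    (hf : ∀ i, HasCompactSupport (f · i) ∧ tsupport (f · i) ⊆ Ω) :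
    HasCompactSupport f ∧ tsupport f ⊆ Ω := by
  have hsub : tsupport f ⊆ ⋃ i, tsupport (f · i) := by
    refine closure_minimal (fun x hx ↦ ?_) (isClosed_iUnion_of_finite fun i ↦ isClosed_tsupport _)
    obtain ⟨i, hi⟩ := Function.ne_iff.1 hx
    exact mem_iUnion.2 ⟨i, subset_tsupport _ hi⟩
  exact ⟨(isCompact_iUnion fun i ↦ (hf i).1).of_isClosed_subset (isClosed_tsupport f) hsub,
    hsub.trans (iUnion_subset fun i ↦ (hf i).2)⟩

variable {E F : Type*} [NormedAddCommGroup E] [NormedSpace ℝ E] [NormedAddCommGroup F]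
  [NormedSpace ℝ F] {Ω : Opens E}

lemma lineDerivOp_apply (f : 𝓓(Ω, F)) (v x : E) : (∂_{v} f) x = fderiv ℝ f x v := by
  rw [TestFunction.lineDerivOp_eq_lineDerivCLM ℝ, TestFunction.lineDerivCLM_apply_of_le (by simp),
    (f.contDiff.differentiable (by simp) x).lineDeriv_eq_fderiv]

lemma lineDerivOp_comm (f : 𝓓(Ω, F)) (v w : E) : ∂_{v} (∂_{w} f) = ∂_{w} (∂_{v} f) := by
  ext x
  have hf : ContDiff ℝ 2 f := contDiff_infty.mp f.contDiff 2
  have hd : DifferentiableAt ℝ (fderiv ℝ f) x := hf.fderiv_right (m := 1) le_rfl |>.differentiable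
    one_ne_zero x
  have key (v w : E) : (∂_{v} (∂_{w} f)) x = fderiv ℝ (fderiv ℝ f) x v w := by
    rw [lineDerivOp_apply, show ⇑(∂_{w} f : 𝓓(Ω, F)) = fun y ↦ fderiv ℝ f y w from
      funext fun y ↦ lineDerivOp_apply f w y, fderiv_clm_apply hd (by fun_prop)]
    simp
  rw [key, key]
  exact hf.contDiffAt.isSymmSndFDerivAt (by simp) v w

/-- The product of a test function with a smooth function. -/
def mulSmooth (a : E → ℝ) (ha : ContDiff ℝ ∞ a) (g : 𝓓(Ω, F)) : 𝓓(Ω, F) where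
  toFun x := a x • g x
  contDiff' := ha.smul g.contDiff
  hasCompactSupport' := g.hasCompactSupport.smul_left
  tsupport_subset' := (tsupport_smul_subset_right a g).trans g.tsupport_subset

/-- The test function `x ↦ f (M x - c)`; the dilation is required not to move the support
out of `Ω`. -/
def rescale (M : ℝ) (hM : M ≠ 0) (c : E) (h : ∀ x, M • x - c ∈ Ω → x ∈ Ω) (f : 𝓓(Ω, F)) :
    𝓓(Ω, F) where
  toFun x := f (M • x - c)
  contDiff' := f.contDiff.comp (by fun_prop)
  hasCompactSupport' := f.hasCompactSupport.comp_homeomorph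
    ((Homeomorph.smulOfNeZero M hM).trans (Homeomorph.subRight c))
  tsupport_subset' x hx := h x <| f.tsupport_subset <|
    tsupport_comp_subset_preimage f (f := fun x ↦ M • x - c) (by fun_prop) hx

@[simp]
lemma rescale_apply (M : ℝ) (hM : M ≠ 0) (c : E) (h : ∀ x, M • x - c ∈ Ω → x ∈ Ω) (f : 𝓓(Ω, F))
    (x : E) : rescale M hM c h f x = f (M • x - c) :=
  rfl

lemma lineDerivOp_rescale (M : ℝ) (hM : M ≠ 0) (c : E) (h : ∀ x, M • x - c ∈ Ω → x ∈ Ω)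
    (f : 𝓓(Ω, F)) (v : E) : ∂_{v} (rescale M hM c h f) = M • rescale M hM c h (∂_{v} f) := by
  ext x
  have hf : HasFDerivAt f (fderiv ℝ f (M • x - c)) (M • x - c) :=
    (f.contDiff.differentiable (by simp) _).hasFDerivAt
  have hg : HasFDerivAt (fun x : E ↦ M • x - c) (M • ContinuousLinearMap.id ℝ E) x :=
    ((hasFDerivAt_id x).const_smul M).sub_const c
  rw [lineDerivOp_apply, show ⇑(rescale M hM c h f) = f ∘ fun x ↦ M • x - c from rfl,
    (hf.comp x hg).fderiv]
  simp [lineDerivOp_apply]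

variable [MeasurableSpace E] [BorelSpace E] (μ : Measure E)

lemma integrable_testFunction [IsFiniteMeasureOnCompacts μ] (f : 𝓓(Ω, F)) : Integrable f μ :=
  f.continuous.integrable_of_hasCompactSupport f.hasCompactSupport

lemma integral_lineDerivOp [FiniteDimensional ℝ E] [μ.IsAddHaarMeasure] (f : 𝓓(Ω, ℝ)) (v : E) :
    ∫ x, (∂_{v} f) x ∂μ = 0 := by
  simp only [lineDerivOp_apply]
  have := integral_mul_fderiv_eq_neg_fderiv_mul_of_integrable (μ := μ) (f := fun _ ↦ (1 : ℝ))
    (g := f) (v := v) (by simp)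
    (by simpa [← lineDerivOp_apply] using integrable_testFunction μ (∂_{v} f))
    (by simpa using integrable_testFunction μ f) (by simp)
    (fun x _ ↦ f.contDiff.differentiable (by simp) x)
  simpa using this

end TestFunctions

section Profiles

lemma exists_cutoff {E : Type*} [NormedAddCommGroup E] [NormedSpace ℝ E] [FiniteDimensional ℝ E]
    [MeasurableSpace E] [BorelSpace E] (μ : Measure E) [μ.Regular] (Ω : Opens E) (hΩ : μ Ω ≠ ⊤)
    {δ : ℝ} (hδ : 0 < δ) :
    ∃ η : 𝓓(Ω, ℝ), (∀ x, η x ∈ Icc (0 : ℝ) 1) ∧ ∫ x in Ω, (1 - η x) ∂μ ≤ δ := by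
  have hΩm : MeasurableSet (Ω : Set E) := Ω.isOpen.measurableSet
  obtain ⟨K, hKΩ, hK, hμK⟩ := hΩm.exists_isCompact_sdiff_lt hΩ (ENNReal.ofReal_pos.2 hδ).ne'
  obtain ⟨K', hK', hKK', hK'Ω⟩ := exists_compact_between hK Ω.isOpen hKΩ
  obtain ⟨f, hf, hf01, hfsupp, hfK⟩ := exists_contMDiff_support_eq_eq_one_iff (n := ⊤)
    (modelWithCornersSelf ℝ E) isOpen_interior hK.isClosed hKK'
  have hsupp : tsupport f ⊆ K' := by
    rw [tsupport, hfsupp]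
    exact closure_minimal interior_subset hK'.isClosed
  let η : 𝓓(Ω, ℝ) := ⟨f, hf.contDiff, hK'.of_isClosed_subset (isClosed_tsupport f) hsupp,
    hsupp.trans hK'Ω⟩
  have hη (x : E) : η x ∈ Icc (0 : ℝ) 1 := hf01 (mem_range_self x)
  refine ⟨η, hη, ?_⟩
  have hind : ∀ x ∈ (Ω : Set E), 1 - η x ≤ ((Ω : Set E) \ K).indicator 1 x := fun x hx ↦ by
    by_cases hxK : x ∈ K
    · simp [hxK, show η x = 1 from (hfK x).1 hxK]
    · simpa [hxK, show x ∈ Ω from hx] using (hη x).1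
  have hint : IntegrableOn (((Ω : Set E) \ K).indicator (1 : E → ℝ)) Ω μ :=
    (integrableOn_const hΩ).indicator (hΩm.diff hK.measurableSet)
  calc ∫ x in Ω, (1 - η x) ∂μ
    _ ≤ ∫ x in Ω, ((Ω : Set E) \ K).indicator 1 x ∂μ :=
        setIntegral_mono_on ((integrableOn_const hΩ).sub (integrable_testFunction μ η).integrableOn)
          hint hΩm hind
    _ = μ.real ((Ω : Set E) \ K) := by
        rw [integral_indicator_one (hΩm.diff hK.measurableSet), measureReal_restrict_apply
          (hΩm.diff hK.measurableSet), inter_eq_left.2 sdiff_subset]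
    _ ≤ δ := ENNReal.toReal_le_of_le_ofReal hδ.le hμK.le

lemma contDiff_comp_fract {f : ℝ → ℝ} {n : ℕ∞ω} (hf : ContDiff ℝ n f)
    (hf0 : ∀ x ∉ Ioo (0 : ℝ) 1, f x = 0) : ContDiff ℝ n fun x ↦ f (Int.fract x) := by
  refine contDiff_iff_contDiffAt.2 fun x ↦ ?_
  have hsum : ContDiffAt ℝ n (fun y ↦ f (y - ⌊x⌋) + f (y - ⌊x⌋ + 1)) x := by fun_prop
  refine hsum.congr_of_eventuallyEq ?_
  filter_upwards [Ioo_mem_nhds (by linarith [Int.floor_le x] : (⌊x⌋ : ℝ) - 1 < x)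
    (Int.lt_floor_add_one x)] with y ⟨hy₁, hy₂⟩
  rcases le_or_gt (⌊x⌋ : ℝ) y with h | h
  · rw [hf0 (y - ⌊x⌋ + 1) fun h' ↦ by linarith [h'.2], add_zero,
      Int.fract, Int.floor_eq_iff.2 ⟨h, hy₂⟩]
  · rw [hf0 (y - ⌊x⌋) fun h' ↦ by linarith [h'.1], zero_add,
      Int.fract, show ⌊y⌋ = ⌊x⌋ - 1 from Int.floor_eq_iff.2 ⟨by simp [hy₁.le], by simp [h]⟩]
    congr 1
    push_cast
    ring

lemma integral_comp_fract {f : ℝ → ℝ} {s : Set ℝ} (hs : s ⊆ Ico 0 1) (hf : ∀ x ∉ s, f x = 0) :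
    ∫ x in (0 : ℝ)..1, f (Int.fract x) = ∫ x in s, f x := by
  have hfract : ∀ x ∈ Ico (0 : ℝ) 1, f (Int.fract x) = f x := fun x hx ↦ by
    rw [Int.fract_eq_self.2 hx]
  rw [intervalIntegral.integral_of_le zero_le_one, ← integral_Ico_eq_integral_Ioc,
    setIntegral_congr_fun measurableSet_Ico hfract,
    setIntegral_eq_integral_of_forall_compl_eq_zero fun x hx ↦ hf x fun h ↦ hx (hs h),
    setIntegral_eq_integral_of_forall_compl_eq_zero hf]

lemma exists_contDiff_setIntegral_eq {t b : ℝ} (ht : 0 < t) (htb : t < b) :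
    ∃ f : ℝ → ℝ, ContDiff ℝ ∞ f ∧ (∀ x, f x ∈ Icc (0 : ℝ) 1) ∧ (∀ x ∉ Ioo 0 b, f x = 0) ∧
      ∫ x in Ioo 0 b, f x = t := by
  let Ω : Opens ℝ := ⟨Ioo 0 b, isOpen_Ioo⟩
  obtain ⟨η, hη, hηb⟩ := exists_cutoff volume Ω (by simp [Ω]) (sub_pos.2 htb)
  set I := ∫ x in Ioo 0 b, η x with hI
  have htI : t ≤ I := by
    have : ∫ x in Ioo 0 b, (1 - η x) ≤ b - t := hηb
    rw [integral_sub (by simp) (integrable_testFunction volume η).integrableOn] at this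
    simp only [integral_const, MeasurableSet.univ, measureReal_restrict_apply, univ_inter,
      Real.volume_real_Ioo_of_le (ht.trans htb).le, sub_zero, smul_eq_mul, mul_one] at this
    linarith
  have hI0 : 0 < I := ht.trans_le htI
  refine ⟨fun x ↦ t / I * η x, contDiff_const.mul η.contDiff, fun x ↦ ?_, fun x hx ↦ ?_, ?_⟩
  · exact ⟨mul_nonneg (div_nonneg ht.le hI0.le) (hη x).1,
      mul_le_one₀ ((div_le_one hI0).2 htI) (hη x).1 (hη x).2⟩
  · exact mul_eq_zero_of_right _ <|
      image_eq_zero_of_notMem_tsupport fun h ↦ hx (η.tsupport_subset h)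
  · rw [integral_const_mul, ← hI, div_mul_cancel₀ t hI0.ne']

lemma exists_periodic_profile {t : ℝ} (ht : t ∈ Ioo (0 : ℝ) 1) {δ : ℝ} (hδ : 0 < δ) :
    ∃ g : ℝ → ℝ, ContDiff ℝ ∞ g ∧ g.Periodic 1 ∧ (∀ x, g x ∈ Icc (0 : ℝ) 1) ∧
      ∫ x in (0 : ℝ)..1, g x = t ∧ ∫ x in (0 : ℝ)..1, g x * (1 - g x) ≤ δ := by
  obtain ⟨b, htb, hb⟩ : ∃ b, t < b ∧ b < min 1 (t + δ) :=
    exists_between (lt_min ht.2 (by linarith))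
  obtain ⟨hb1, hbδ⟩ := lt_min_iff.1 hb
  have hsub : Ioo 0 b ⊆ Ioo 0 1 := Ioo_subset_Ioo_right hb1.le
  have hIco : Ioo 0 b ⊆ Ico 0 1 := hsub.trans Ioo_subset_Ico_self
  obtain ⟨f, hfs, hf, hf0, hmean⟩ := exists_contDiff_setIntegral_eq ht.1 htb
  have hfc : Continuous f := hfs.continuous
  have hint {h : ℝ → ℝ} (hh : Continuous h) : IntegrableOn h (Ioo 0 b) :=
    hh.integrableOn_Icc.mono_set Ioo_subset_Icc_self
  refine ⟨fun x ↦ f (Int.fract x), contDiff_comp_fract hfs fun x hx ↦ hf0 x fun h ↦ hx (hsub h),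
    fun x ↦ by simp only [Int.fract_add_one], fun x ↦ hf _,
    by rw [integral_comp_fract hIco hf0, hmean], ?_⟩
  calc ∫ x in (0 : ℝ)..1, f (Int.fract x) * (1 - f (Int.fract x))
    _ = ∫ x in Ioo 0 b, f x * (1 - f x) :=
        integral_comp_fract (f := fun x ↦ f x * (1 - f x)) hIco fun x hx ↦ by simp [hf0 x hx]
    _ ≤ ∫ x in Ioo 0 b, (1 - f x) :=
        setIntegral_mono (hint (by fun_prop)) (hint (by fun_prop))
          fun x ↦ mul_le_of_le_one_left (sub_nonneg.2 (hf x).2) (hf x).2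
    _ = b - t := by
        rw [integral_sub (hint continuous_const) (hint hfc), hmean]
        simp [(ht.1.trans htb).le]
    _ ≤ δ := by linarith

lemma exists_periodic_primitive {h : ℝ → ℝ} (hs : ContDiff ℝ ∞ h) (hp : h.Periodic 1)
    (h0 : ∫ x in (0 : ℝ)..1, h x = 0) :
    ∃ H : ℝ → ℝ, ContDiff ℝ ∞ H ∧ H.Periodic 1 ∧ ∫ x in (0 : ℝ)..1, H x = 0 ∧ deriv H = h := by
  have hint (a b : ℝ) : IntervalIntegrable h volume a b := hs.continuous.intervalIntegrable a b
  let P (x : ℝ) : ℝ := ∫ y in (0 : ℝ)..x, h y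
  have hP (x : ℝ) : HasDerivAt P (h x) x :=
    (hs.continuous.integral_hasStrictDerivAt 0 x).hasDerivAt
  have hPs : ContDiff ℝ ∞ P := contDiff_infty_iff_deriv.2
    ⟨fun x ↦ (hP x).differentiableAt, by rwa [funext fun x ↦ (hP x).deriv]⟩
  have hPp : P.Periodic 1 := fun x ↦ by
    rw [← add_zero (P x), ← h0, ← zero_add (1 : ℝ), ← hp.intervalIntegral_add_eq x 0, zero_add]
    exact (intervalIntegral.integral_add_adjacent_intervals (hint _ _) (hint _ _)).symm
  refine ⟨fun x ↦ P x - ∫ y in (0 : ℝ)..1, P y, hPs.sub contDiff_const,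
    fun x ↦ by simp only [hPp x], ?_, funext fun x ↦ ((hP x).sub_const _).deriv⟩
  rw [intervalIntegral.integral_sub (hPs.continuous.intervalIntegrable _ _) (by simp)]
  simp

lemma exists_periodic_iterated_primitive {h : ℝ → ℝ} (hs : ContDiff ℝ ∞ h) (hp : h.Periodic 1)
    (h0 : ∫ x in (0 : ℝ)..1, h x = 0) (k : ℕ) :
    ∃ H : ℝ → ℝ, ContDiff ℝ ∞ H ∧ H.Periodic 1 ∧ deriv^[k] H = h := by
  induction k generalizing h with
  | zero => exact ⟨h, hs, hp, rfl⟩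
  | succ k ih =>
    obtain ⟨G, hGs, hGp, hG0, rfl⟩ := exists_periodic_primitive hs hp h0
    obtain ⟨H, hHs, hHp, rfl⟩ := ih hGs hGp hG0
    exact ⟨H, hHs, hHp, Function.iterate_succ_apply' deriv k H⟩

lemma exists_phase_integral_le {α : Type*} [MeasurableSpace α] (μ : Measure α)
    [IsProbabilityMeasure μ] {L : α → ℝ} (hL : Measurable L) {G : ℝ → ℝ} (hG : Continuous G)
    (hp : G.Periodic 1) : ∃ s, ∫ x, G (L x + s) ∂μ ≤ ∫ y in (0 : ℝ)..1, G y := by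
  have : IsProbabilityMeasure (volume.restrict (Ioc (0 : ℝ) 1)) := ⟨by simp⟩
  obtain ⟨C, hC⟩ := (hp.compact_of_continuous one_ne_zero hG).exists_bound_of_continuousOn
    continuousOn_id
  have hint : Integrable (fun p : ℝ × α ↦ G (L p.2 + p.1))
      ((volume.restrict (Ioc (0 : ℝ) 1)).prod μ) :=
    .of_bound (hG.measurable.comp (by fun_prop)).aestronglyMeasurable C
      (.of_forall fun p ↦ hC _ (mem_range_self _))
  have hswap : ∫ s in Ioc (0 : ℝ) 1, ∫ x, G (L x + s) ∂μ = ∫ y in (0 : ℝ)..1, G y := by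
    have hinner (x : α) : ∫ s in Ioc (0 : ℝ) 1, G (L x + s) = ∫ y in (0 : ℝ)..1, G y := by
      rw [← intervalIntegral.integral_of_le zero_le_one, intervalIntegral.integral_comp_add_left,
        add_zero, hp.intervalIntegral_add_eq (L x) 0, zero_add]
    rw [integral_integral_swap hint]
    simp [hinner]
  rw [← hswap]
  exact exists_le_integral hint.integral_prod_left

end Profiles

section PlaneWaves

variable {E : Type*}

/-- All triples of a frequency `N ≥ 1`, a phase and a point: a Landau bound along this filter is
one that is uniform in the phase and in the point. -/
def waveFilter (E : Type*) : Filter (ℝ × ℝ × E) := 𝓟 {p | 1 ≤ p.1}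

lemma eventually_waveFilter_pos : ∀ᶠ p : ℝ × ℝ × E in waveFilter E, 0 < p.1 :=
  eventually_principal.2 fun _ hp ↦ one_pos.trans_le hp

lemma isBigO_inv_waveFilter :
    (fun p : ℝ × ℝ × E ↦ p.1⁻¹) =O[waveFilter E] fun _ ↦ (1 : ℝ) := by
  refine isBigO_principal.2 ⟨1, fun p (hp : 1 ≤ p.1) ↦ ?_⟩
  rw [norm_inv, Real.norm_of_nonneg (zero_le_one.trans hp), norm_one, mul_one]
  exact inv_le_one_of_one_le₀ hp

variable [NormedAddCommGroup E] [NormedSpace ℝ E] {Ω : Opens E}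

/-- The localized plane wave `x ↦ a (N ℓ(x) + s) g(x)` with profile `a`, direction `ℓ`,
frequency `N`, phase `s` and amplitude `g`. -/
def wave (ℓ : E →L[ℝ] ℝ) (N s : ℝ) {a : ℝ → ℝ} (ha : ContDiff ℝ ∞ a) (g : 𝓓(Ω, ℝ)) : 𝓓(Ω, ℝ) :=
  mulSmooth (fun x ↦ a (N * ℓ x + s)) (ha.comp (by fun_prop)) g

@[simp]
lemma wave_apply (ℓ : E →L[ℝ] ℝ) (N s : ℝ) {a : ℝ → ℝ} (ha : ContDiff ℝ ∞ a) (g : 𝓓(Ω, ℝ))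
    (x : E) : wave ℓ N s ha g x = a (N * ℓ x + s) * g x :=
  rfl

lemma lineDerivOp_wave (ℓ : E →L[ℝ] ℝ) (N s : ℝ) {a : ℝ → ℝ} (ha : ContDiff ℝ ∞ a)
    (g : 𝓓(Ω, ℝ)) (v : E) :
    ∂_{v} (wave ℓ N s ha g) =
      (N * ℓ v) • wave ℓ N s (contDiff_infty_iff_deriv.1 ha).2 g + wave ℓ N s ha (∂_{v} g) := by
  ext x
  have hg : HasFDerivAt g (fderiv ℝ g x) x := (g.contDiff.differentiable (by simp) x).hasFDerivAt
  have ha' : HasDerivAt a (deriv a (N * ℓ x + s)) (N * ℓ x + s) :=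
    (ha.differentiable (by simp) _).hasDerivAt
  have hℓ : HasFDerivAt (fun x ↦ N * ℓ x + s) (N • ℓ) x := (ℓ.hasFDerivAt.const_mul N).add_const s
  have hw : HasFDerivAt (wave ℓ N s ha g) _ x := (ha'.comp_hasFDerivAt x hℓ).mul hg
  rw [lineDerivOp_apply, hw.fderiv]
  simp [lineDerivOp_apply]
  ring

lemma inv_pow_mul_iteratedLineDerivOp_wave (ℓ : E →L[ℝ] ℝ) {N : ℝ} (hN : N ≠ 0) (s : ℝ)
    {a : ℝ → ℝ} (ha : ContDiff ℝ ∞ a) (g : 𝓓(Ω, ℝ)) {k : ℕ} (m : Fin (k + 1) → E) (x : E) :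
    (N ^ (k + 1))⁻¹ * (∂^{m} (wave ℓ N s ha g)) x =
      ℓ (m (Fin.last k)) * ((N ^ k)⁻¹ *
        (∂^{Fin.init m} (wave ℓ N s (contDiff_infty_iff_deriv.1 ha).2 g)) x) +
      N⁻¹ * ((N ^ k)⁻¹ * (∂^{Fin.init m} (wave ℓ N s ha (∂_{m (Fin.last k)} g))) x) := by
  rw [iteratedLineDerivOp_succ_right, lineDerivOp_wave, iteratedLineDerivOp_add,
    iteratedLineDerivOp_smul, add_apply, smul_apply, smul_eq_mul, pow_succ]
  field_simp

lemma periodic_deriv {a : ℝ → ℝ} {c : ℝ} (hp : a.Periodic c) : (deriv a).Periodic c := fun x ↦ by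
  rw [← deriv_comp_add_const, hp.funext]

lemma isBigO_wave (ℓ : E →L[ℝ] ℝ) {a : ℝ → ℝ} (ha : ContDiff ℝ ∞ a) (hp : a.Periodic 1)
    (g : 𝓓(Ω, ℝ)) :
    (fun p : ℝ × ℝ × E ↦ wave ℓ p.1 p.2.1 ha g p.2.2) =O[waveFilter E] fun _ ↦ (1 : ℝ) := by
  have hrange : IsCompact (range a) := hp.compact_of_continuous one_ne_zero ha.continuous
  obtain ⟨A, hA⟩ := hrange.exists_bound_of_continuousOn continuousOn_id
  obtain ⟨G, hG⟩ := g.hasCompactSupport.exists_bound_of_continuous g.continuous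
  refine .of_bound (A * G) (.of_forall fun p ↦ ?_)
  rw [wave_apply, norm_mul, norm_one, mul_one]
  gcongr
  exacts [(norm_nonneg _).trans (hA _ (mem_range_self 0)), hA _ (mem_range_self _), hG _]

lemma isBigO_iteratedLineDerivOp_wave (ℓ : E →L[ℝ] ℝ) {a : ℝ → ℝ} (ha : ContDiff ℝ ∞ a)
    (hp : a.Periodic 1) (g : 𝓓(Ω, ℝ)) {k : ℕ} (m : Fin k → E) :
    (fun p ↦ (p.1 ^ k)⁻¹ * (∂^{m} (wave ℓ p.1 p.2.1 ha g)) p.2.2) =O[waveFilter E]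
      fun _ ↦ (1 : ℝ) := by
  induction k generalizing a g with
  | zero => simpa using isBigO_wave ℓ ha hp g
  | succ k ih =>
    have h₁ := ih (contDiff_infty_iff_deriv.1 ha).2 (periodic_deriv hp) g (Fin.init m)
    have h₂ := ih ha hp (∂_{m (Fin.last k)} g) (Fin.init m)
    have h₃ := isBigO_inv_waveFilter.mul h₂
    simp only [mul_one] at h₃
    refine ((h₁.const_mul_left (ℓ (m (Fin.last k)))).add h₃).congr' ?_ .rfl
    filter_upwards [eventually_waveFilter_pos] with p hp
    rw [inv_pow_mul_iteratedLineDerivOp_wave ℓ hp.ne']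

lemma isBigO_iteratedLineDerivOp_wave_sub (ℓ : E →L[ℝ] ℝ) {a : ℝ → ℝ} (ha : ContDiff ℝ ∞ a)
    (hp : a.Periodic 1) (g : 𝓓(Ω, ℝ)) {k : ℕ} (m : Fin k → E) :
    (fun p ↦ (p.1 ^ k)⁻¹ * (∂^{m} (wave ℓ p.1 p.2.1 ha g)) p.2.2 -
      (∏ i, ℓ (m i)) * (deriv^[k] a (p.1 * ℓ p.2.2 + p.2.1) * g p.2.2)) =O[waveFilter E]
      fun p ↦ p.1⁻¹ := by
  induction k generalizing a g with
  | zero => simpa using isBigO_zero (fun p : ℝ × ℝ × E ↦ p.1⁻¹) (waveFilter E)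
  | succ k ih =>
    have h₁ := ih (contDiff_infty_iff_deriv.1 ha).2 (periodic_deriv hp) g (Fin.init m)
    have h₂ := isBigO_iteratedLineDerivOp_wave ℓ ha hp (∂_{m (Fin.last k)} g) (Fin.init m)
    have h₃ := (isBigO_refl (fun p : ℝ × ℝ × E ↦ p.1⁻¹) (waveFilter E)).mul h₂
    simp only [mul_one] at h₃
    refine ((h₁.const_mul_left (ℓ (m (Fin.last k)))).add h₃).congr' ?_ .rfl
    filter_upwards [eventually_waveFilter_pos] with p hp
    rw [inv_pow_mul_iteratedLineDerivOp_wave ℓ hp.ne', Fin.prod_univ_castSucc,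
      Function.iterate_succ_apply]
    simp only [Fin.init]
    ring

end PlaneWaves

section Grid

/-- The open unit cube, as an open set on which test functions live. -/
def unitCube (d : ℕ) : Opens (Vec d) where
  carrier := {x | ∀ i, x i ∈ Ioo (0 : ℝ) 1}
  is_open' := by
    simpa only [Set.pi, mem_univ, true_imp_iff] using
      isOpen_set_pi finite_univ fun (_ : Fin d) _ ↦ isOpen_Ioo (a := (0 : ℝ)) (b := 1)

/-- The half-open unit cube, which is tiled exactly by the cells of its subdivisions. -/
def halfOpenCube (d : ℕ) : Set (Vec d) := {x | ∀ i, x i ∈ Ico (0 : ℝ) 1}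

/-- The integer point with coordinates `k`. -/
def gridPoint {d M : ℕ} (k : Fin d → Fin M) : Vec d := fun i ↦ (k i : ℕ)

/-- The cell with corner `k / M` of the subdivision of the half-open unit cube into `M ^ d`
cubes. -/
def gridCell {d M : ℕ} (k : Fin d → Fin M) : Set (Vec d) :=
  {x | (M : ℝ) • x - gridPoint k ∈ halfOpenCube d}

variable {d M : ℕ}

lemma halfOpenCube_eq_pi : halfOpenCube d = univ.pi fun _ ↦ Ico (0 : ℝ) 1 := by
  ext x
  simp only [halfOpenCube, mem_ofPred_eq, mem_univ_pi]

lemma measurableSet_halfOpenCube : MeasurableSet (halfOpenCube d) := by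
  rw [halfOpenCube_eq_pi]
  exact .univ_pi fun _ ↦ measurableSet_Ico

instance : IsProbabilityMeasure (volume.restrict (halfOpenCube d)) :=
  ⟨by simp [halfOpenCube_eq_pi, volume_pi_pi]⟩

lemma unitCube_subset_halfOpenCube : (unitCube d : Set (Vec d)) ⊆ halfOpenCube d :=
  fun _ hx i ↦ Ioo_subset_Ico_self (hx i)

lemma setIntegral_unitCube (f : 𝓓(unitCube d, ℝ)) : ∫ x in unitCube d, f x = ∫ x, f x :=
  setIntegral_eq_integral_of_forall_compl_eq_zero fun _ hx ↦
    image_eq_zero_of_notMem_tsupport fun h ↦ hx (f.tsupport_subset h)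

lemma halfOpenCube_subset_Icc : halfOpenCube d ⊆ Icc (0 : Vec d) 1 :=
  fun _ hx ↦ ⟨fun i ↦ (hx i).1, fun i ↦ (hx i).2.le⟩

lemma integrableOn_halfOpenCube {E : Type*} [NormedAddCommGroup E] {f : Vec d → E}
    (hf : Continuous f) : IntegrableOn f (halfOpenCube d) :=
  (hf.continuousOn.integrableOn_compact isCompact_Icc).mono_set halfOpenCube_subset_Icc

lemma mem_gridCell {k : Fin d → Fin M} {x : Vec d} :
    x ∈ gridCell k ↔ ∀ i, ((k i : ℕ) : ℝ) ≤ M * x i ∧ M * x i < (k i : ℕ) + 1 := by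
  simp [gridCell, halfOpenCube, gridPoint, sub_lt_iff_lt_add']

lemma mem_unitCube_of_smul_sub_gridPoint_mem {k : Fin d → Fin M} {x : Vec d}
    (hx : (M : ℝ) • x - gridPoint k ∈ unitCube d) : x ∈ unitCube d := fun i ↦ by
  have hk : ((k i : ℕ) : ℝ) + 1 ≤ M := mod_cast (k i).2
  have h : 0 < M * x i - (k i : ℕ) ∧ M * x i - (k i : ℕ) < 1 := hx i
  have hM : (0 : ℝ) < M := mod_cast (Nat.zero_le _).trans_lt (k i).2
  constructor
  · exact pos_of_mul_pos_right (((k i : ℕ).cast_nonneg).trans_lt (sub_pos.1 h.1)) hM.le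
  · exact lt_of_mul_lt_mul_left (by linarith) hM.le

lemma eq_of_mem_gridCell {k l : Fin d → Fin M} {x : Vec d} (hk : x ∈ gridCell k)
    (hl : x ∈ gridCell l) : k = l := by
  rw [mem_gridCell] at hk hl
  funext i
  have h₁ : ((k i : ℕ) : ℝ) < (l i : ℕ) + 1 := (hk i).1.trans_lt (hl i).2
  have h₂ : ((l i : ℕ) : ℝ) < (k i : ℕ) + 1 := (hl i).1.trans_lt (hk i).2
  norm_cast at h₁ h₂
  omega

lemma measurableSet_gridCell (k : Fin d → Fin M) : MeasurableSet (gridCell k) :=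
  measurableSet_halfOpenCube.preimage (by fun_prop)

lemma iUnion_gridCell (hM : 0 < M) : ⋃ k : Fin d → Fin M, gridCell k = halfOpenCube d := by
  have hM' : (0 : ℝ) < M := mod_cast hM
  refine (iUnion_subset fun k x hx i ↦ ?_).antisymm fun x hx ↦ mem_iUnion.2 ?_
  · obtain ⟨h₁, h₂⟩ := mem_gridCell.1 hx i
    have hk : ((k i : ℕ) : ℝ) + 1 ≤ M := mod_cast (k i).2
    exact ⟨nonneg_of_mul_nonneg_right ((k i : ℕ).cast_nonneg.trans h₁) hM',
      lt_of_mul_lt_mul_left (by linarith) hM'.le⟩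
  · have h0 (i : Fin d) : 0 ≤ M * x i := mul_nonneg hM'.le (hx i).1
    refine ⟨fun i ↦ ⟨⌊M * x i⌋₊, (Nat.floor_lt (h0 i)).2 (mul_lt_of_lt_one_right hM' (hx i).2)⟩,
      mem_gridCell.2 fun i ↦ ⟨Nat.floor_le (h0 i), Nat.lt_floor_add_one _⟩⟩

lemma gridCell_subset (hM : 0 < M) (k : Fin d → Fin M) : gridCell k ⊆ halfOpenCube d :=
  iUnion_gridCell (d := d) hM ▸ subset_iUnion (fun k ↦ gridCell k) k

lemma dist_le_of_mem_gridCell (hM : 0 < M) {k : Fin d → Fin M} {x y : Vec d}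
    (hx : x ∈ gridCell k) (hy : y ∈ gridCell k) : dist x y ≤ 1 / M := by
  rw [mem_gridCell] at hx hy
  have hM' : (0 : ℝ) < M := mod_cast hM
  refine (dist_pi_le_iff (by positivity)).2 fun i ↦ ?_
  rw [Real.dist_eq, le_div_iff₀' hM', ← abs_of_pos hM', ← abs_mul, abs_le, mul_sub]
  constructor <;> linarith [(hx i).1, (hx i).2, (hy i).1, (hy i).2]

lemma setIntegral_halfOpenCube_eq_sum (hM : 0 < M) {f : Vec d → ℝ} (hf : Continuous f) :
    ∫ x in halfOpenCube d, f x = ∑ k : Fin d → Fin M, ∫ x in gridCell k, f x := by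
  rw [← iUnion_gridCell hM, integral_iUnion_fintype measurableSet_gridCell
    (fun k l hkl ↦ disjoint_left.2 fun x hk hl ↦ hkl (eq_of_mem_gridCell hk hl))
    fun k ↦ (integrableOn_halfOpenCube hf).mono_set (gridCell_subset hM k)]

lemma setIntegral_gridCell_comp (k : Fin d → Fin M) (f : Vec d → ℝ) :
    ∫ x in gridCell k, f ((M : ℝ) • x - gridPoint k) =
      ((M : ℝ) ^ d)⁻¹ * ∫ x in halfOpenCube d, f x := by
  have hind : (gridCell k).indicator (fun x ↦ f ((M : ℝ) • x - gridPoint k)) =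
      fun x ↦ (fun y ↦ (halfOpenCube d).indicator f (y - gridPoint k)) ((M : ℝ) • x) := rfl
  rw [← integral_indicator (measurableSet_gridCell k), hind, Measure.integral_comp_smul,
    integral_sub_right_eq_self, integral_indicator measurableSet_halfOpenCube]
  simp

lemma setIntegral_gridCell_le {E : Type*} [NormedAddCommGroup E] (hM : 0 < M) {D : E → ℝ}
    (hD : LipschitzWith 1 D) {f z : Vec d → E} (hf : Continuous f) (hz : Continuous z) {ζ : E}
    {δ : ℝ} {k : Fin d → Fin M}
    (hzζ : ∀ x ∈ gridCell k, dist (z x) ζ ≤ δ) :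
    ∫ x in gridCell k, D (z x + f ((M : ℝ) • x - gridPoint k)) ≤
      ((M : ℝ) ^ d)⁻¹ * ((∫ y in halfOpenCube d, D (ζ + f y)) + δ) := by
  have hint {g : Vec d → ℝ} (hg : Continuous g) : IntegrableOn g (gridCell k) :=
    (integrableOn_halfOpenCube hg).mono_set (gridCell_subset hM k)
  have hDc := hD.continuous
  calc ∫ x in gridCell k, D (z x + f ((M : ℝ) • x - gridPoint k))
    _ ≤ ∫ x in gridCell k, (fun y ↦ D (ζ + f y) + δ) ((M : ℝ) • x - gridPoint k) := by
        refine setIntegral_mono_on (hint (by fun_prop)) (hint (by fun_prop))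
          (measurableSet_gridCell k) fun x hx ↦ ?_
        have := hD.le_add_mul (z x + f ((M : ℝ) • x - gridPoint k))
          (ζ + f ((M : ℝ) • x - gridPoint k))
        rw [dist_add_right, NNReal.coe_one, one_mul] at this
        exact this.trans (add_le_add_right (hzζ x hx) _)
    _ = _ := by
        rw [setIntegral_gridCell_comp k fun y ↦ D (ζ + f y) + δ,
          integral_add (integrableOn_halfOpenCube (by fun_prop)) (integrable_const δ)]
        simp

lemma exists_gridCell_dist_lt {X : Type*} [PseudoMetricSpace X] {f : Vec d → X}
    (hf : Continuous f) {δ : ℝ} (hδ : 0 < δ) (R : ℝ) :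
    ∃ M : ℕ, 0 < M ∧ R ≤ M ∧
      ∀ k : Fin d → Fin M, ∀ x ∈ gridCell k, ∀ y ∈ gridCell k, dist (f x) (f y) < δ := by
  obtain ⟨ρ, hρ, hfρ⟩ := uniformContinuousOn_iff.1
    (isCompact_Icc.uniformContinuousOn_of_continuous
      (hf.continuousOn (s := Icc (0 : Vec d) 1))) δ hδ
  obtain ⟨M, hM⟩ := exists_nat_gt (max (1 / ρ) R)
  have hMρ : 1 / ρ < M := (le_max_left _ _).trans_lt hM
  have hM0 : 0 < M := by exact_mod_cast (one_div_pos.2 hρ).trans hMρ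
  have hIcc (k : Fin d → Fin M) := (gridCell_subset hM0 k).trans halfOpenCube_subset_Icc
  exact ⟨M, hM0, (le_max_right _ _).trans hM.le, fun k x hx y hy ↦
    hfρ x (hIcc k hx) y (hIcc k hy) <|
      (dist_le_of_mem_gridCell hM0 hx hy).trans_lt (one_div_lt hρ (mod_cast hM0) |>.1 hMρ)⟩

end Grid

section ConvexIntegration

variable {d : ℕ} {E : Type*} [NormedAddCommGroup E]

/-- The state `p` admits a perturbation in `𝒲` that stays in `𝒰`, with a margin `b` absorbing its
lower-order part, and whose average `D`-value is less than `ε`. -/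
def Approximable (𝒲 : AddSubmonoid ((Vec d → E) × (Vec d → E))) (𝒰 : Set E) (D : E → ℝ) (ε : ℝ)
    (p : E) : Prop :=
  ∃ F ∈ 𝒲, ∃ b ∈ Ioc 0 ε, (∀ x ∈ halfOpenCube d, closedBall (p + F.1 x) b ⊆ 𝒰 ∧ ‖F.2 x‖ ≤ b) ∧
    ∫ x in halfOpenCube d, D (p + F.1 x) < ε

variable {𝒲 : AddSubmonoid ((Vec d → E) × (Vec d → E))} {𝒰 : Set E} {D : E → ℝ}

lemma approximable_of_mem (h𝒰 : IsOpen 𝒰) {ε : ℝ} (hε : 0 < ε) {p : E} (hp : p ∈ 𝒰)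
    (hD : D p < ε) : Approximable 𝒲 𝒰 D ε p := by
  obtain ⟨b, hb, hb𝒰⟩ := nhds_basis_closedBall.mem_iff.1 (h𝒰.mem_nhds hp)
  refine ⟨0, 𝒲.zero_mem, min b ε, ⟨lt_min hb hε, min_le_right b ε⟩, fun x _ ↦ ⟨?_, ?_⟩, ?_⟩
  · simpa using (closedBall_subset_closedBall (min_le_left b ε)).trans hb𝒰
  · simpa using ⟨hb.le, hε.le⟩
  · simpa using hD

lemma exists_common_margin (hD0 : ∀ y, 0 ≤ D y) {ε : ℝ} {ξ ξ' : E}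
    (hξ : Approximable 𝒲 𝒰 D ε ξ) (hξ' : Approximable 𝒲 𝒰 D ε ξ') :
    ∃ b ∈ Ioc 0 ε, ∃ m ∈ Ico 0 ε, ∀ ζ ∈ ({ξ, ξ'} : Set E), ∃ F ∈ 𝒲,
      (∀ y ∈ halfOpenCube d, closedBall (ζ + F.1 y) b ⊆ 𝒰 ∧ ‖F.2 y‖ ≤ ε) ∧
        ∫ y in halfOpenCube d, D (ζ + F.1 y) ≤ m := by
  obtain ⟨F₁, hF₁, b₁, ⟨hb₁, hb₁ε⟩, hF₁𝒰, hF₁D⟩ := hξ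
  obtain ⟨F₂, hF₂, b₂, ⟨hb₂, hb₂ε⟩, hF₂𝒰, hF₂D⟩ := hξ'
  refine ⟨min b₁ b₂, ⟨lt_min hb₁ hb₂, min_le_of_left_le hb₁ε⟩, _,
    ⟨le_max_of_le_left (integral_nonneg fun _ ↦ hD0 _), max_lt hF₁D hF₂D⟩, ?_⟩
  rintro ζ (rfl | rfl)
  · exact ⟨F₁, hF₁, fun y hy ↦ ⟨(closedBall_subset_closedBall (min_le_left _ _)).trans
      (hF₁𝒰 y hy).1, (hF₁𝒰 y hy).2.trans hb₁ε⟩, le_max_left _ _⟩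
  · exact ⟨F₂, hF₂, fun y hy ↦ ⟨(closedBall_subset_closedBall (min_le_right _ _)).trans
      (hF₂𝒰 y hy).1, (hF₂𝒰 y hy).2.trans hb₂ε⟩, le_max_right _ _⟩

variable [NormedSpace ℝ E]

/-- The pair `F` transplanted into the cell `gridCell k`. The second component is the lower-order
part of a perturbation, which gains a factor `M⁻¹` when the scale is refined `M` times. -/
def transplant {M : ℕ} (k : Fin d → Fin M) (F : (Vec d → E) × (Vec d → E)) :
    (Vec d → E) × (Vec d → E) :=
  (fun x ↦ F.1 ((M : ℝ) • x - gridPoint k), fun x ↦ (M : ℝ)⁻¹ • F.2 ((M : ℝ) • x - gridPoint k))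

/-- The pairs in `𝒲` are the admissible perturbations of a constant state, split as a principal
part plus a lower-order part: they are localized in the unit cube, and can be transplanted into
the cells of any subdivision. -/
structure IsPerturbationClass (𝒲 : AddSubmonoid ((Vec d → E) × (Vec d → E))) : Prop where
  continuous_fst : ∀ F ∈ 𝒲, Continuous F.1
  continuous_snd : ∀ F ∈ 𝒲, Continuous F.2
  eq_zero_of_notMem : ∀ F ∈ 𝒲, ∀ x ∉ unitCube d, F.1 x = 0 ∧ F.2 x = 0
  transplant_mem : ∀ F ∈ 𝒲, ∀ M : ℕ, 0 < M → ∀ k : Fin d → Fin M, transplant k F ∈ 𝒲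

/-- Perturbations in `𝒲` of the barycentre `t ξ + (1 - t) ξ'` can remain close to the segment
`[ξ', ξ]` and oscillate between its endpoints, up to an error that is small in mean. -/
def Oscillates (𝒲 : AddSubmonoid ((Vec d → E) × (Vec d → E))) (ξ ξ' : E) : Prop :=
  ∀ t ∈ Ioo (0 : ℝ) 1, ∀ δ > 0, ∃ F ∈ 𝒲,
    (∀ x, t • ξ + (1 - t) • ξ' + F.1 x ∈ cthickening δ (segment ℝ ξ' ξ) ∧ ‖F.2 x‖ ≤ δ) ∧
    ∫ x in halfOpenCube d, infDist (t • ξ + (1 - t) • ξ' + F.1 x) {ξ, ξ'} ≤ δ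

variable {M : ℕ}

lemma IsPerturbationClass.sum_transplant_apply (h𝒲 : IsPerturbationClass 𝒲)
    {F : (Fin d → Fin M) → (Vec d → E) × (Vec d → E)} (hF : ∀ k, F k ∈ 𝒲) {k : Fin d → Fin M}
    {x : Vec d} (hx : x ∈ gridCell k) :
    (∑ l, transplant l (F l)).1 x = (transplant k (F k)).1 x ∧
      (∑ l, transplant l (F l)).2 x = (transplant k (F k)).2 x := by
  have h0 (l : Fin d → Fin M) (hl : l ≠ k) :
      (transplant l (F l)).1 x = 0 ∧ (transplant l (F l)).2 x = 0 := by
    obtain ⟨h₁, h₂⟩ := h𝒲.eq_zero_of_notMem (F l) (hF l) ((M : ℝ) • x - gridPoint l) fun h ↦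
      hl (eq_of_mem_gridCell (unitCube_subset_halfOpenCube h) hx)
    exact ⟨h₁, by simp [transplant, h₂]⟩
  rw [Prod.fst_sum, Prod.snd_sum, Finset.sum_apply, Finset.sum_apply]
  exact ⟨Finset.sum_eq_single_of_mem k (Finset.mem_univ k) fun l _ hl ↦ (h0 l hl).1,
    Finset.sum_eq_single_of_mem k (Finset.mem_univ k) fun l _ hl ↦ (h0 l hl).2⟩

/-- Correct on the cells where `z` is close to some `ζ ∈ S` by the perturbation of `ζ`; on the
other cells `infDist (z x) S ≥ δ / 2`, which pays for `D (z x) ≤ C`. -/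
lemma IsPerturbationClass.exists_cell_correction (h𝒲 : IsPerturbationClass 𝒲)
    (hD : LipschitzWith 1 D) {z : Vec d → E} (hz : Continuous z) {S : Set E} (hS : S.Nonempty)
    {b β δ m C : ℝ} (hβ : 0 ≤ β) (hδ : 0 < δ) (hm : 0 ≤ m) (hC : 0 ≤ C)
    (hz𝒰 : ∀ x ∈ halfOpenCube d, closedBall (z x) b ⊆ 𝒰 ∧ D (z x) ≤ C)
    (hS𝒲 : ∀ ζ ∈ S, ∃ F ∈ 𝒲, (∀ y ∈ halfOpenCube d,
      closedBall (ζ + F.1 y) (b + δ) ⊆ 𝒰 ∧ ‖F.2 y‖ ≤ β) ∧ ∫ y in halfOpenCube d, D (ζ + F.1 y) ≤ m)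
    (hM : 0 < M) {k : Fin d → Fin M}
    (hosc : ∀ x ∈ gridCell k, ∀ y ∈ gridCell k, dist (z x) (z y) < δ / 2) :
    ∃ F ∈ 𝒲, (∀ x ∈ gridCell k, closedBall (z x + (transplant k F).1 x) b ⊆ 𝒰 ∧
      ‖(transplant k F).2 x‖ ≤ (M : ℝ)⁻¹ * β) ∧
      ∫ x in gridCell k, D (z x + (transplant k F).1 x) ≤
        ((M : ℝ) ^ d)⁻¹ * (m + δ) + 2 * C / δ * ∫ x in gridCell k, infDist (z x) S := by
  have hsub := gridCell_subset hM k
  by_cases hnear : ∃ x₀ ∈ gridCell k, infDist (z x₀) S < δ / 2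
  · obtain ⟨x₀, hx₀, hlt⟩ := hnear
    obtain ⟨ζ, hζ, hx₀ζ⟩ := (infDist_lt_iff hS).1 hlt
    have hzζ (x : Vec d) (hx : x ∈ gridCell k) : dist (z x) ζ ≤ δ := by
      linarith [dist_triangle (z x) (z x₀) ζ, hosc x hx x₀ hx₀]
    obtain ⟨F, hF, hFS, hFm⟩ := hS𝒲 ζ hζ
    refine ⟨F, hF, fun x hx ↦ ⟨?_, ?_⟩, ?_⟩
    · refine (closedBall_subset_closedBall' ?_).trans (hFS _ hx).1
      rw [transplant, dist_add_right]
      exact add_le_add_right (hzζ x hx) b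
    · simpa only [transplant, norm_smul, norm_inv, RCLike.norm_natCast] using
        mul_le_mul_of_nonneg_left (hFS _ hx).2 (by positivity)
    · refine (setIntegral_gridCell_le hM hD (h𝒲.continuous_fst F hF) hz hzζ).trans ?_
      refine le_add_of_le_of_nonneg (mul_le_mul_of_nonneg_left (add_le_add_left hFm δ)
        (by positivity)) (mul_nonneg (by positivity) ?_)
      exact integral_nonneg fun _ ↦ infDist_nonneg
  · push Not at hnear
    have hint {g : Vec d → ℝ} (hg : Continuous g) : IntegrableOn g (gridCell k) :=
      (integrableOn_halfOpenCube hg).mono_set hsub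
    have hDc := hD.continuous
    have _ : Continuous fun x ↦ infDist (z x) S := (continuous_infDist_pt S).comp hz
    refine ⟨0, 𝒲.zero_mem, fun x hx ↦ ⟨?_, ?_⟩, ?_⟩
    · simpa [transplant] using (hz𝒰 x (hsub hx)).1
    · simpa [transplant] using by positivity
    · refine le_add_of_nonneg_of_le (by positivity) ?_
      rw [← integral_const_mul]
      refine setIntegral_mono_on (hint (by simpa [transplant] using by fun_prop))
        (hint (by fun_prop)) (measurableSet_gridCell k) fun x hx ↦ ?_
      calc D (z x + (transplant k 0).1 x) = D (z x) := by simp [transplant]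
        _ ≤ C := (hz𝒰 x (hsub hx)).2
        _ = 2 * C / δ * (δ / 2) := by field_simp
        _ ≤ 2 * C / δ * infDist (z x) S := by gcongr; exact hnear x hx

lemma IsPerturbationClass.exists_refinement (h𝒲 : IsPerturbationClass 𝒲)
    (hD : LipschitzWith 1 D) {F₀ : (Vec d → E) × (Vec d → E)} (hF₀ : F₀ ∈ 𝒲) (p : E) {S : Set E}
    (hS : S.Nonempty) {b β γ δ m C : ℝ} (hβ : 0 ≤ β) (hγ : 0 < γ) (hδ : 0 < δ) (hm : 0 ≤ m)
    (hC : 0 ≤ C)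
    (hF₀𝒰 : ∀ x ∈ halfOpenCube d, closedBall (p + F₀.1 x) b ⊆ 𝒰 ∧ D (p + F₀.1 x) ≤ C)
    (hS𝒲 : ∀ ζ ∈ S, ∃ F ∈ 𝒲, (∀ y ∈ halfOpenCube d, closedBall (ζ + F.1 y) (b + δ) ⊆ 𝒰 ∧
      ‖F.2 y‖ ≤ β) ∧ ∫ y in halfOpenCube d, D (ζ + F.1 y) ≤ m) :
    ∃ G ∈ 𝒲, (∀ x ∈ halfOpenCube d, closedBall (p + G.1 x) b ⊆ 𝒰 ∧ ‖G.2 x‖ ≤ ‖F₀.2 x‖ + γ) ∧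
      ∫ x in halfOpenCube d, D (p + G.1 x) ≤
        m + δ + 2 * C / δ * ∫ x in halfOpenCube d, infDist (p + F₀.1 x) S := by
  have hz : Continuous fun x ↦ p + F₀.1 x := (h𝒲.continuous_fst F₀ hF₀).const_add p
  obtain ⟨M, hM, hMR, hosc⟩ := exists_gridCell_dist_lt hz (half_pos hδ) (β / γ)
  choose F hF hF𝒰 hFD using fun k : Fin d → Fin M ↦ h𝒲.exists_cell_correction hD hz hS hβ hδ hm
    hC hF₀𝒰 hS𝒲 hM (hosc k)
  have hG : F₀ + ∑ k, transplant k (F k) ∈ 𝒲 :=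
    add_mem hF₀ (sum_mem fun k _ ↦ h𝒲.transplant_mem (F k) (hF k) M hM k)
  have hGcell {k : Fin d → Fin M} {x : Vec d} (hx : x ∈ gridCell k) :
      p + (F₀ + ∑ k, transplant k (F k)).1 x = p + F₀.1 x + (transplant k (F k)).1 x := by
    rw [Prod.fst_add, Pi.add_apply, (h𝒲.sum_transplant_apply hF hx).1, add_assoc]
  refine ⟨_, hG, fun x hx ↦ ?_, ?_⟩
  · obtain ⟨k, hk⟩ := mem_iUnion.1 (iUnion_gridCell hM ▸ hx)
    obtain ⟨h𝒰, hsnd⟩ := hF𝒰 k x hk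
    refine ⟨by rwa [hGcell hk], ?_⟩
    rw [Prod.snd_add, Pi.add_apply, (h𝒲.sum_transplant_apply hF hk).2]
    refine (norm_add_le _ _).trans (add_le_add_right (hsnd.trans ?_) _)
    rwa [inv_mul_le_iff₀ (mod_cast hM), ← div_le_iff₀ hγ]
  · have hGc : Continuous fun x ↦ D (p + (F₀ + ∑ k, transplant k (F k)).1 x) :=
      hD.continuous.comp ((h𝒲.continuous_fst _ hG).const_add p)
    have hdist : Continuous fun x ↦ infDist (p + F₀.1 x) S := (continuous_infDist_pt S).comp hz
    calc ∫ x in halfOpenCube d, D (p + (F₀ + ∑ k, transplant k (F k)).1 x)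
      _ = ∑ k : Fin d → Fin M, ∫ x in gridCell k, D (p + F₀.1 x + (transplant k (F k)).1 x) := by
          rw [setIntegral_halfOpenCube_eq_sum hM hGc]
          exact Finset.sum_congr rfl fun k _ ↦
            setIntegral_congr_fun (measurableSet_gridCell k) fun x hx ↦ by simp only [hGcell hx]
      _ ≤ ∑ k : Fin d → Fin M, (((M : ℝ) ^ d)⁻¹ * (m + δ) +
            2 * C / δ * ∫ x in gridCell k, infDist (p + F₀.1 x) S) :=
          Finset.sum_le_sum fun k _ ↦ hFD k
      _ = _ := by
          rw [Finset.sum_add_distrib, setIntegral_halfOpenCube_eq_sum hM hdist, Finset.mul_sum,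
            Finset.sum_const, nsmul_eq_mul, ← mul_assoc, Finset.card_univ]
          simp [hM.ne']

lemma exists_cthickening_margin {X : Type*} [PseudoMetricSpace X] {K U : Set X} (hK : IsCompact K)
    (hU : IsOpen U) (hKU : K ⊆ U) {f : X → ℝ} (hf : LipschitzWith 1 f) :
    ∃ r > 0, ∃ C > 0, ∀ z ∈ cthickening r K, closedBall z r ⊆ U ∧ f z ≤ C := by
  obtain ⟨r, hr, hrU⟩ := hK.exists_cthickening_subset_open hU hKU
  obtain ⟨C, hC, hfC⟩ :=
    (hf.isBounded_image (hK.isBounded.cthickening (δ := r / 2))).exists_pos_norm_le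
  refine ⟨r / 2, half_pos hr, C, hC, fun z hz ↦ ⟨?_, (le_abs_self _).trans <|
    hfC _ (mem_image_of_mem f hz)⟩⟩
  refine (closedBall_subset_cthickening hz _).trans <|
    (cthickening_cthickening_subset (half_pos hr).le (half_pos hr).le K).trans ?_
  rwa [add_halves]

/-- The scales of a refinement: `b` is the margin kept inside `𝒰`, `δ` the mesh error, `τ` the error
of the oscillation between the endpoints. -/
lemma exists_refinement_scales {r b₀ C m ε : ℝ} (hr : 0 < r) (hb₀ : 0 < b₀) (hC : 0 < C)
    (hmε : m < ε) : ∃ b > 0, ∃ δ > 0, ∃ τ > 0,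
      b ≤ r ∧ b + δ ≤ b₀ ∧ τ ≤ b / 2 ∧ m + δ + 2 * C / δ * τ < ε := by
  obtain ⟨b, hb, hblt⟩ := exists_between (lt_min hr (half_pos hb₀))
  obtain ⟨hbr, hbb₀⟩ := lt_min_iff.1 hblt
  obtain ⟨δ, hδ, hδlt⟩ := exists_between (lt_min hb (sub_pos.2 hmε))
  obtain ⟨hδb, hδm⟩ := lt_min_iff.1 hδlt
  obtain ⟨τ, hτ, hτlt⟩ := exists_between
    (lt_min (half_pos hb) (div_pos (sub_pos.2 hδm) (by positivity : 0 < 2 * C / δ)))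
  obtain ⟨hτb, hτm⟩ := lt_min_iff.1 hτlt
  rw [lt_div_iff₀' (by positivity)] at hτm
  exact ⟨b, hb, δ, hδ, τ, hτ, hbr.le, by linarith, hτb.le, by linarith⟩

theorem IsPerturbationClass.approximable_of_oscillates (h𝒲 : IsPerturbationClass 𝒲)
    (h𝒰 : IsOpen 𝒰) (hD0 : ∀ y, 0 ≤ D y) (hD : LipschitzWith 1 D) {ε : ℝ} {ξ ξ' : E}
    (hξ : Approximable 𝒲 𝒰 D ε ξ) (hξ' : Approximable 𝒲 𝒰 D ε ξ') (hseg : segment ℝ ξ' ξ ⊆ 𝒰)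
    (hosc : Oscillates 𝒲 ξ ξ') {t : ℝ} (ht : t ∈ Icc (0 : ℝ) 1) :
    Approximable 𝒲 𝒰 D ε (t • ξ + (1 - t) • ξ') := by
  obtain rfl | ht0 := ht.1.eq_or_lt
  · simpa using hξ'
  obtain rfl | ht1 := ht.2.eq_or_lt
  · simpa using hξ
  obtain ⟨b₀, ⟨hb₀, hb₀ε⟩, m, ⟨hm0, hmε⟩, hends⟩ := exists_common_margin hD0 hξ hξ'
  have hK : IsCompact (segment ℝ ξ' ξ) :=
    convexHull_pair (𝕜 := ℝ) ξ' ξ ▸ (toFinite {ξ', ξ}).isCompact_convexHull ℝ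
  obtain ⟨r, hr, C, hC, hrC⟩ := exists_cthickening_margin hK h𝒰 hseg hD
  obtain ⟨b, hb, δ, hδ, τ, hτ, hbr, hbb₀, hτb, hτε⟩ := exists_refinement_scales hr hb₀ hC hmε
  obtain ⟨F₀, hF₀, hF₀seg, hF₀int⟩ := hosc t ⟨ht0, ht1⟩ τ hτ
  have hmargin (x : Vec d) (_ : x ∈ halfOpenCube d) :
      closedBall (t • ξ + (1 - t) • ξ' + F₀.1 x) b ⊆ 𝒰 ∧ D (t • ξ + (1 - t) • ξ' + F₀.1 x) ≤ C :=
    have h := hrC _ (cthickening_mono (by linarith) _ (hF₀seg x).1)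
    ⟨(closedBall_subset_closedBall hbr).trans h.1, h.2⟩
  have hends' (ζ : E) (hζ : ζ ∈ ({ξ, ξ'} : Set E)) : ∃ F ∈ 𝒲, (∀ y ∈ halfOpenCube d,
      closedBall (ζ + F.1 y) (b + δ) ⊆ 𝒰 ∧ ‖F.2 y‖ ≤ ε) ∧
        ∫ y in halfOpenCube d, D (ζ + F.1 y) ≤ m :=
    have ⟨F, hF, hF𝒰, hFm⟩ := hends ζ hζ
    ⟨F, hF, fun y hy ↦ ⟨(closedBall_subset_closedBall hbb₀).trans (hF𝒰 y hy).1,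
      (hF𝒰 y hy).2⟩, hFm⟩
  obtain ⟨G, hG, hG𝒰, hGD⟩ := h𝒲.exists_refinement hD hF₀ _ (insert_nonempty ξ {ξ'})
    (hb₀.le.trans hb₀ε) (half_pos hb) hδ hm0 hC.le hmargin hends'
  refine ⟨G, hG, b, ⟨hb, by linarith⟩, fun x hx ↦ ⟨(hG𝒰 x hx).1, ?_⟩, hGD.trans_lt ?_⟩
  · linarith [(hG𝒰 x hx).2, (hF₀seg x).2]
  · linarith [mul_le_mul_of_nonneg_left hF₀int (by positivity : 0 ≤ 2 * C / δ)]

end ConvexIntegration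

section Energy

variable {d : ℕ} {E : Type*} [NormedAddCommGroup E] {D : E → ℝ} {p : E}

/-- Pointwise `D p ≤ D (p + F) + ‖F‖`, so a perturbation that makes `D` small in mean is large. -/
lemma sq_sub_le_integral_norm_sq (hD : LipschitzWith 1 D) {b : ℝ} {F G : Vec d → E}
    (hF : Continuous F) (hG : Continuous G) (hp : 0 ≤ D p) (hGb : ∀ x ∈ halfOpenCube d, ‖G x‖ ≤ b) :
    D p ^ 2 - 2 * D p * (b + ∫ x in halfOpenCube d, D (p + F x)) ≤
      ∫ x in halfOpenCube d, ‖F x + G x‖ ^ 2 := by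
  have hpoint : ∀ x ∈ halfOpenCube d,
      (D p ^ 2 - 2 * D p * b) - 2 * D p * D (p + F x) ≤ ‖F x + G x‖ ^ 2 := by
    intro x hx
    have hlip : D p ≤ D (p + F x) + ‖F x‖ := by
      simpa [dist_eq_norm] using hD.le_add_mul p (p + F x)
    have hFG : ‖F x‖ ≤ ‖F x + G x‖ + b :=
      (norm_le_norm_add_norm_sub (F x + G x) (F x)).trans (by simpa using hGb x hx)
    nlinarith [sq_nonneg (‖F x + G x‖ - D p)]
  have hDint : IntegrableOn (fun x ↦ 2 * D p * D (p + F x)) (halfOpenCube d) :=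
    integrableOn_halfOpenCube (continuous_const.mul (hD.continuous.comp (by fun_prop)))
  have hconst : IntegrableOn (fun _ ↦ D p ^ 2 - 2 * D p * b) (halfOpenCube d) :=
    integrableOn_halfOpenCube continuous_const
  calc D p ^ 2 - 2 * D p * (b + ∫ x in halfOpenCube d, D (p + F x))
    _ = ∫ x in halfOpenCube d, ((D p ^ 2 - 2 * D p * b) - 2 * D p * D (p + F x)) := by
        rw [integral_sub hconst hDint, integral_const, integral_const_mul, probReal_univ, one_smul]
        ring
    _ ≤ ∫ x in halfOpenCube d, ‖F x + G x‖ ^ 2 :=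
        setIntegral_mono_on (hconst.sub hDint) (integrableOn_halfOpenCube (by fun_prop))
          measurableSet_halfOpenCube hpoint

variable [NormedSpace ℝ E] {𝒲 : AddSubmonoid ((Vec d → E) × (Vec d → E))} {𝒰 : Set E}

lemma IsPerturbationClass.exists_energy_of_approximable (h𝒲 : IsPerturbationClass 𝒲)
    (hD : LipschitzWith 1 D) (hp : 0 ≤ D p) (happrox : ∀ ε > 0, Approximable 𝒲 𝒰 D ε p) :
    ∃ F ∈ 𝒲, (∀ x ∈ halfOpenCube d, p + (F.1 x + F.2 x) ∈ 𝒰) ∧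
      D p ^ 2 / 2 ≤ ∫ x in halfOpenCube d, ‖F.1 x + F.2 x‖ ^ 2 := by
  obtain ⟨ε, hε, hpε⟩ : ∃ ε > 0, 8 * D p * ε ≤ D p ^ 2 := by
    rcases hp.eq_or_lt with h | h
    · exact ⟨1, one_pos, by simp [← h]⟩
    · exact ⟨D p / 8, by positivity, by linarith⟩
  obtain ⟨F, hF, b, ⟨-, hbε⟩, hin, hDε⟩ := happrox ε hε
  refine ⟨F, hF, fun x hx ↦ (hin x hx).1 ?_, ?_⟩
  · simpa [mem_closedBall, dist_eq_norm, ← add_assoc] using (hin x hx).2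
  · have hlow := sq_sub_le_integral_norm_sq hD (h𝒲.continuous_fst F hF)
      (h𝒲.continuous_snd F hF) hp fun x hx ↦ (hin x hx).2
    nlinarith [mul_le_mul_of_nonneg_left (add_le_add hbε hDε.le) hp]

end Energy

section Oscillation

variable {d : ℕ} {E : Type*} [NormedAddCommGroup E] [NormedSpace ℝ E]

/-- The direction `σ` carries plane waves of `𝒲`: every smooth mean-zero periodic profile `h`,
localized by a cutoff `η`, is up to `O(N⁻¹)` the principal part of a member of `𝒲` with lower-order
part `O(N⁻¹)`. -/
def HasPlaneWaves (𝒲 : AddSubmonoid ((Vec d → E) × (Vec d → E))) (σ : E) : Prop :=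
  ∃ ℓ : Vec d →L[ℝ] ℝ, ∀ h : ℝ → ℝ, ContDiff ℝ ∞ h → h.Periodic 1 →
    ∫ y in (0 : ℝ)..1, h y = 0 → ∀ η : 𝓓(unitCube d, ℝ), ∃ C, ∀ N, 1 ≤ N → ∀ s, ∃ F ∈ 𝒲,
      ∀ x, ‖F.1 x - (h (N * ℓ x + s) * η x) • σ‖ ≤ C / N ∧ ‖F.2 x‖ ≤ C / N

lemma exists_one_le_div_le (C : ℝ) {δ : ℝ} (hδ : 0 < δ) : ∃ N, 1 ≤ N ∧ C / N ≤ δ :=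
  ⟨max 1 (C / δ), le_max_left _ _, by
    rw [div_le_iff₀ (by positivity), ← div_le_iff₀' hδ]
    exact le_max_right _ _⟩

lemma min_lineMap_one_sub_le {t η g : ℝ} (ht : t ∈ Icc (0 : ℝ) 1) (hη : η ∈ Icc (0 : ℝ) 1)
    (hg : g ∈ Icc (0 : ℝ) 1) :
    min (AffineMap.lineMap t g η) (1 - AffineMap.lineMap t g η) ≤ 2 * (g * (1 - g)) + (1 - η) := by
  obtain ⟨⟨ht0, ht1⟩, ⟨-, hη1⟩, hg0, hg1⟩ := And.intro ht (And.intro hη hg)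
  rw [AffineMap.lineMap_apply_ring]
  rcases le_total g (1 / 2) with h | h
  · exact (min_le_left _ _).trans (by nlinarith)
  · exact (min_le_right _ _).trans (by nlinarith)

lemma infDist_pair_le {ξ ξ' p : E} {q : ℝ} (hq : q ∈ Icc (0 : ℝ) 1) :
    infDist p {ξ, ξ'} ≤ dist p (AffineMap.lineMap ξ' ξ q) + min q (1 - q) * dist ξ' ξ := by
  have h' : infDist (AffineMap.lineMap ξ' ξ q) {ξ, ξ'} ≤ min q (1 - q) * dist ξ' ξ := by
    rw [min_mul_of_nonneg _ _ dist_nonneg]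
    refine le_min ?_ ?_
    · have h := dist_lineMap_left ξ' ξ q
      rw [Real.norm_of_nonneg hq.1] at h
      exact h ▸ infDist_le_dist_of_mem (mem_insert_of_mem ξ (mem_singleton ξ'))
    · have h := dist_lineMap_right ξ' ξ q
      rw [Real.norm_of_nonneg (sub_nonneg.2 hq.2)] at h
      exact h ▸ infDist_le_dist_of_mem (mem_insert ξ {ξ'})
  linarith [infDist_le_infDist_add_dist (s := {ξ, ξ'}) (x := p) (y := AffineMap.lineMap ξ' ξ q)]

lemma halfOpenCube_ae_eq_unitCube : halfOpenCube d =ᵐ[volume] (unitCube d : Set (Vec d)) := by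
  have h : (unitCube d : Set (Vec d)) = univ.pi fun _ ↦ Ioo (0 : ℝ) 1 := by
    ext x
    simp [unitCube]
  rw [h, halfOpenCube_eq_pi]
  exact (Measure.univ_pi_Ico_ae_eq_Icc (μ := fun _ : Fin d ↦ volume)).trans
    (Measure.univ_pi_Ioo_ae_eq_Icc (μ := fun _ : Fin d ↦ volume)).symm

lemma exists_cutoff_unitCube {δ : ℝ} (hδ : 0 < δ) : ∃ η : 𝓓(unitCube d, ℝ),
    (∀ x, η x ∈ Icc (0 : ℝ) 1) ∧ ∫ x in halfOpenCube d, (1 - η x) ≤ δ := by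
  simp only [setIntegral_congr_set halfOpenCube_ae_eq_unitCube]
  refine exists_cutoff volume (unitCube d) (ne_top_of_le_ne_top ?_
    (measure_mono unitCube_subset_halfOpenCube)) hδ
  simp [halfOpenCube_eq_pi, volume_pi_pi]

lemma barycentre_add_mem_cthickening_and_infDist_le {ξ ξ' w : E} {t η g δ : ℝ}
    (ht : t ∈ Icc (0 : ℝ) 1) (hη : η ∈ Icc (0 : ℝ) 1) (hg : g ∈ Icc (0 : ℝ) 1)
    (hw : ‖w - ((g - t) * η) • (ξ - ξ')‖ ≤ δ) :
    t • ξ + (1 - t) • ξ' + w ∈ cthickening δ (segment ℝ ξ' ξ) ∧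
      infDist (t • ξ + (1 - t) • ξ' + w) {ξ, ξ'} ≤
        δ + dist ξ' ξ * (2 * (g * (1 - g)) + (1 - η)) := by
  set q : ℝ := AffineMap.lineMap t g η with hq
  have hq01 : q ∈ Icc (0 : ℝ) 1 := (convex_Icc 0 1).lineMap_mem ht hg hη
  have hdist : dist (t • ξ + (1 - t) • ξ' + w) (AffineMap.lineMap ξ' ξ q) ≤ δ := by
    rw [dist_eq_norm]
    refine Eq.trans_le (congrArg norm ?_) hw
    simp only [hq, AffineMap.lineMap_apply_ring, AffineMap.lineMap_apply_module]
    module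
  refine ⟨mem_cthickening_of_dist_le _ (AffineMap.lineMap ξ' ξ q) _ _ ?_ hdist,
    (infDist_pair_le hq01).trans (add_le_add hdist ?_)⟩
  · rw [segment_eq_image_lineMap]
    exact mem_image_of_mem _ hq01
  · rw [mul_comm]
    exact mul_le_mul_of_nonneg_left (min_lineMap_one_sub_le ht hη hg) dist_nonneg

variable {𝒲 : AddSubmonoid ((Vec d → E) × (Vec d → E))}

theorem HasPlaneWaves.oscillates (h𝒲 : IsPerturbationClass 𝒲) {ξ ξ' : E}
    (hσ : HasPlaneWaves 𝒲 (ξ - ξ')) : Oscillates 𝒲 ξ ξ' := by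
  intro t ht δ hδ
  set L := dist ξ' ξ
  have hL : 0 ≤ L := dist_nonneg
  obtain ⟨δ', hδ', hδδ'⟩ : ∃ δ' > 0, δ' + L * (2 * δ' + δ') = δ :=
    ⟨δ / (3 * L + 1), by positivity, by field_simp; ring⟩
  obtain ⟨g, hgs, hgp, hg01, hgt, hgδ⟩ := exists_periodic_profile ht hδ'
  obtain ⟨η, hη, hηδ⟩ := exists_cutoff_unitCube (d := d) hδ'
  obtain ⟨ℓ, hℓ⟩ := hσ
  obtain ⟨C, hC⟩ := hℓ (fun y ↦ g y - t) (hgs.sub contDiff_const) (fun y ↦ by simp only [hgp y])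
    (by simp [intervalIntegral.integral_sub (hgs.continuous.intervalIntegrable 0 1), hgt]) η
  obtain ⟨N, hN, hCN⟩ := exists_one_le_div_le C hδ'
  obtain ⟨s, hs⟩ := exists_phase_integral_le (volume.restrict (halfOpenCube d))
    (L := fun x ↦ N * ℓ x) (by fun_prop) (G := fun y ↦ g y * (1 - g y))
    (hgs.continuous.mul (continuous_const.sub hgs.continuous)) fun y ↦ by simp only [hgp y]
  obtain ⟨F, hF, hFC⟩ := hC N hN s
  have hnear (x : Vec d) := barycentre_add_mem_cthickening_and_infDist_le
    (Ioo_subset_Icc_self ht) (hη x) (hg01 (N * ℓ x + s)) ((hFC x).1.trans hCN)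
  have hδ'δ : δ' ≤ δ := by nlinarith
  refine ⟨F, hF, fun x ↦ ⟨cthickening_mono hδ'δ _ (hnear x).1,
    ((hFC x).2.trans hCN).trans hδ'δ⟩, ?_⟩
  have _ : Continuous fun x ↦ g (N * ℓ x + s) := hgs.continuous.comp (by fun_prop)
  have hFc := h𝒲.continuous_fst F hF
  calc ∫ x in halfOpenCube d, infDist (t • ξ + (1 - t) • ξ' + F.1 x) {ξ, ξ'}
    _ ≤ ∫ x in halfOpenCube d,
          (δ' + L * (2 * (g (N * ℓ x + s) * (1 - g (N * ℓ x + s))) + (1 - η x))) :=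
        setIntegral_mono
          (integrableOn_halfOpenCube ((continuous_infDist_pt _).comp (by fun_prop)))
          (integrableOn_halfOpenCube (by fun_prop)) fun x ↦ (hnear x).2
    _ = δ' + L * (2 * (∫ x in halfOpenCube d, g (N * ℓ x + s) * (1 - g (N * ℓ x + s))) +
          ∫ x in halfOpenCube d, (1 - η x)) := by
        rw [integral_add (integrable_const _) (integrableOn_halfOpenCube (by fun_prop)),
          integral_const_mul, integral_add (integrableOn_halfOpenCube (by fun_prop))
          (integrableOn_halfOpenCube (by fun_prop)), integral_const_mul]
        simp
    _ ≤ δ' + L * (2 * δ' + δ') := by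
        gcongr
        exact hs.trans hgδ
    _ = δ := hδδ'

end Oscillation

section Potentials

variable {d : ℕ} {Ω : Opens (Vec d)}

/-- The partial derivative `∂ᵢ` as a linear operator on test functions. -/
def partialDeriv (i : Fin d) : 𝓓(Ω, ℝ) →ₗ[ℝ] 𝓓(Ω, ℝ) :=
  (lineDerivOpCLM ℝ 𝓓(Ω, ℝ) (Pi.single i 1 : Vec d)).toLinearMap

lemma pd_testFunction (i : Fin d) (f : 𝓓(Ω, ℝ)) (x : Vec d) : pd i f x = partialDeriv i f x :=
  (lineDerivOp_apply f _ x).symm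

lemma partialDeriv_comm (i j : Fin d) (f : 𝓓(Ω, ℝ)) :
    partialDeriv i (partialDeriv j f) = partialDeriv j (partialDeriv i f) :=
  lineDerivOp_comm f _ _

lemma partialDeriv_rescale (M : ℝ) (hM : M ≠ 0) (c : Vec d) (h : ∀ x, M • x - c ∈ Ω → x ∈ Ω)
    (i : Fin d) (f : 𝓓(Ω, ℝ)) :
    partialDeriv i (rescale M hM c h f) = M • rescale M hM c h (partialDeriv i f) :=
  lineDerivOp_rescale M hM c h f _

/-- The integral as a linear functional on test functions. -/
def integralFunctional : 𝓓(Ω, ℝ) →ₗ[ℝ] ℝ where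
  toFun f := ∫ x, f x
  map_add' f g := integral_add (integrable_testFunction volume f) (integrable_testFunction volume g)
  map_smul' c f := integral_const_mul c f

lemma integralFunctional_apply (f : 𝓓(Ω, ℝ)) : integralFunctional f = ∫ x, f x :=
  rfl

lemma integralFunctional_partialDeriv (i : Fin d) (f : 𝓓(Ω, ℝ)) :
    integralFunctional (partialDeriv i f) = 0 :=
  integral_lineDerivOp volume f _

variable {Ω : Opens (Vec 2)}

/-- The Laplacian on test functions of two variables. -/
def laplacian (φ : 𝓓(Ω, ℝ)) : 𝓓(Ω, ℝ) :=
  partialDeriv 0 (partialDeriv 0 φ) + partialDeriv 1 (partialDeriv 1 φ)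

/-- The velocity with stream function `Δφ`, as the pair `(v₁, v₂)`. -/
def velocity (φ : 𝓓(Ω, ℝ)) : 𝓓(Ω, ℝ) × 𝓓(Ω, ℝ) :=
  (-partialDeriv 1 (laplacian φ), partialDeriv 0 (laplacian φ))

/-- The trace-free matrix field derived from `χ` whose divergence is `-∇(Δχ / 2)`, as the pair
`(U₁₁, U₁₂)`. -/
def stress (χ : 𝓓(Ω, ℝ)) : 𝓓(Ω, ℝ) × 𝓓(Ω, ℝ) :=
  ((1 / 2 : ℝ) • (partialDeriv 1 (partialDeriv 1 χ) - partialDeriv 0 (partialDeriv 0 χ)),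
    -partialDeriv 0 (partialDeriv 1 χ))

/-- A second-order trace-free matrix field derived from `φ` whose divergence is
`B (velocity φ)` up to a gradient, as the pair `(U₁₁, U₁₂)`. -/
def lowerStress (B : Mat 2) (φ : 𝓓(Ω, ℝ)) : 𝓓(Ω, ℝ) × 𝓓(Ω, ℝ) :=
  (((B 0 1 + B 1 0) / 2) • laplacian φ - (B 0 0 + B 1 1) • partialDeriv 0 (partialDeriv 1 φ),
    B 1 1 • partialDeriv 0 (partialDeriv 0 φ) - B 0 0 • partialDeriv 1 (partialDeriv 1 φ))

/-- The pressure that balances `stress χ + lowerStress B φ`. -/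
def pressure (B : Mat 2) (φ χ : 𝓓(Ω, ℝ)) : 𝓓(Ω, ℝ) :=
  (1 / 2 : ℝ) • laplacian χ + ((B 0 1 - B 1 0) / 2) • laplacian φ

/-- The pair `(v₁, v₂)` as a vector field. -/
def vectorField (f : 𝓓(Ω, ℝ) × 𝓓(Ω, ℝ)) : Fin 2 → 𝓓(Ω, ℝ) :=
  ![f.1, f.2]

/-- The symmetric trace-free matrix field with first row `(U₁₁, U₁₂)`. -/
def traceFreeField (g : 𝓓(Ω, ℝ) × 𝓓(Ω, ℝ)) : Fin 2 → Fin 2 → 𝓓(Ω, ℝ) :=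
  ![![g.1, g.2], ![g.2, -g.1]]

lemma traceFreeField_mem_S0 (g : 𝓓(Ω, ℝ) × 𝓓(Ω, ℝ)) (x : Vec 2) :
    (fun i j ↦ traceFreeField g i j x) ∈ S0 2 :=
  ⟨fun i j ↦ by fin_cases i <;> fin_cases j <;> rfl, by simp [traceFreeField]⟩

lemma divergence_velocity (φ : 𝓓(Ω, ℝ)) :
    ∑ i, partialDeriv i (vectorField (velocity φ) i) = 0 := by
  simp [velocity, vectorField, partialDeriv_comm 1 0]

lemma momentum_balance (B : Mat 2) (φ χ : 𝓓(Ω, ℝ)) (i : Fin 2) :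
    ∑ j, partialDeriv j (traceFreeField (stress χ + lowerStress B φ) i j) +
      partialDeriv i (pressure B φ χ) = ∑ j, B i j • vectorField (velocity φ) j := by
  fin_cases i <;>
    simp only [traceFreeField, vectorField, stress, lowerStress, pressure, velocity, laplacian,
      Fin.sum_univ_two, Fin.zero_eta, Fin.mk_one, Matrix.cons_val_zero, Matrix.cons_val_one,
      Prod.fst_add, Prod.snd_add, map_add, map_sub, map_neg, map_smul, partialDeriv_comm 1 0] <;>
    module

lemma integral_velocity (φ : 𝓓(Ω, ℝ)) (i : Fin 2) : ∫ x, vectorField (velocity φ) i x = 0 := by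
  rw [← integralFunctional_apply]
  fin_cases i <;> simp [vectorField, velocity, integralFunctional_partialDeriv]

lemma integral_stress (B : Mat 2) (φ χ : 𝓓(Ω, ℝ)) (i j : Fin 2) :
    ∫ x, traceFreeField (stress χ + lowerStress B φ) i j x = 0 := by
  rw [← integralFunctional_apply]
  fin_cases i <;> fin_cases j <;>
    simp [traceFreeField, stress, lowerStress, laplacian, integralFunctional_partialDeriv]

end Potentials

section PerturbationClass

variable {E : Type*} [NormedAddCommGroup E] [NormedSpace ℝ E] {Ω : Opens E}

/-- The field `a + b i` with real and imaginary parts the test functions `a` and `b`. -/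
def complexField (f : 𝓓(Ω, ℝ) × 𝓓(Ω, ℝ)) (x : E) : ℂ :=
  f.1 x + f.2 x * Complex.I

lemma complexField_re (f : 𝓓(Ω, ℝ) × 𝓓(Ω, ℝ)) (x : E) : (complexField f x).re = f.1 x := by
  simp [complexField]

lemma complexField_im (f : 𝓓(Ω, ℝ) × 𝓓(Ω, ℝ)) (x : E) : (complexField f x).im = f.2 x := by
  simp [complexField]

lemma continuous_complexField (f : 𝓓(Ω, ℝ) × 𝓓(Ω, ℝ)) : Continuous (complexField f) :=
  (Complex.continuous_ofReal.comp f.1.continuous).add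
    ((Complex.continuous_ofReal.comp f.2.continuous).mul continuous_const)

variable (B : Mat 2)

/-- The perturbation with potentials `φ` and `χ`, in complex coordinates: its velocity and stress,
and the lower-order stress that compensates the forcing `B`. -/
def perturbation : 𝓓(unitCube 2, ℝ) × 𝓓(unitCube 2, ℝ) →+ (Vec 2 → ℂ × ℂ) × (Vec 2 → ℂ × ℂ) where
  toFun p := (fun x ↦ (complexField (velocity p.1) x, complexField (stress p.2) x),
    fun x ↦ (0, complexField (lowerStress B p.1) x))
  map_zero' := by
    ext x <;> simp [complexField, velocity, stress, lowerStress, laplacian]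
  map_add' p q := by
    ext x <;> simp [complexField, velocity, stress, lowerStress, laplacian] <;> ring

lemma perturbation_snd_apply (p : 𝓓(unitCube 2, ℝ) × 𝓓(unitCube 2, ℝ)) (x : Vec 2) :
    (perturbation B p).2 x = (0, complexField (lowerStress B p.1) x) :=
  rfl

/-- The perturbations of a constant state, in complex coordinates. -/
def perturbations : AddSubmonoid ((Vec 2 → ℂ × ℂ) × (Vec 2 → ℂ × ℂ)) :=
  AddMonoidHom.mrange (perturbation B)

lemma transplant_perturbation {M : ℕ} (hM : 0 < M) (k : Fin 2 → Fin M)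
    (φ χ : 𝓓(unitCube 2, ℝ)) : ∃ p, perturbation B p = transplant k (perturbation B (φ, χ)) := by
  have hM0 : (M : ℝ) ≠ 0 := by positivity
  have hMC : (M : ℂ) ≠ 0 := by exact_mod_cast hM.ne'
  have h (x : Vec 2) := mem_unitCube_of_smul_sub_gridPoint_mem (k := k) (x := x)
  refine ⟨(((M : ℝ) ^ 3)⁻¹ • rescale M hM0 (gridPoint k) h φ,
    ((M : ℝ) ^ 2)⁻¹ • rescale M hM0 (gridPoint k) h χ), ?_⟩
  ext x <;> simp [perturbation, transplant, complexField, velocity, stress, lowerStress, laplacian,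
    partialDeriv_rescale] <;> field_simp

lemma isPerturbationClass_perturbations : IsPerturbationClass (perturbations B) where
  continuous_fst := by
    rintro _ ⟨p, rfl⟩
    exact (continuous_complexField _).prodMk (continuous_complexField _)
  continuous_snd := by
    rintro _ ⟨p, rfl⟩
    exact continuous_const.prodMk (continuous_complexField _)
  eq_zero_of_notMem := by
    rintro _ ⟨p, rfl⟩ x hx
    have h (f : 𝓓(unitCube 2, ℝ)) : f x = 0 :=
      image_eq_zero_of_notMem_tsupport fun h ↦ hx (f.tsupport_subset h)
    simp [perturbation, complexField, h]
  transplant_mem := by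
    rintro _ ⟨p, rfl⟩ M hM k
    exact transplant_perturbation B hM k p.1 p.2

end PerturbationClass

section EulerPlaneWaves

lemma exists_snd_eq_mul_sq_of_mem_cLam {σ : ℂ × ℂ} (hσ : σ ∈ cLam) :
    ∃ μ : ℝ, σ.2 = μ * σ.1 ^ 2 := by
  obtain ⟨z, ζ⟩ := σ
  obtain ⟨hz, him⟩ := hσ
  have hreal := congrArg (starRingEnd ℂ) (Complex.re_add_im (z ^ 2 * (starRingEnd ℂ) ζ))
  simp only [him, Complex.ofReal_zero, zero_mul, add_zero, Complex.conj_ofReal, map_mul,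
    Complex.conj_conj] at hreal
  refine ⟨(z ^ 2 * (starRingEnd ℂ) ζ).re / Complex.normSq (z ^ 2), ?_⟩
  have hq : (starRingEnd ℂ) (z ^ 2) ≠ 0 := by simpa using hz
  rw [Complex.ofReal_div, hreal, Complex.normSq_eq_conj_mul_self]
  field_simp

/-- The covector `x ↦ (Im z) x₁ - (Re z) x₂`, whose kernel is spanned by `z`. -/
def waveCovector (z : ℂ) : Vec 2 →L[ℝ] ℝ :=
  z.im • ContinuousLinearMap.proj 0 - z.re • ContinuousLinearMap.proj 1

variable {Ω : Opens (Vec 2)} {a : ℝ → ℝ} (ha : ContDiff ℝ ∞ a) (hp : a.Periodic 1) (η : 𝓓(Ω, ℝ))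
  {z : ℂ}

lemma waveCovector_single_zero (z : ℂ) : waveCovector z (Pi.single 0 1) = z.im := by
  simp [waveCovector]

lemma waveCovector_single_one (z : ℂ) : waveCovector z (Pi.single 1 1) = -z.re := by
  simp [waveCovector]

lemma isBigO_of_isBigO_re_im {α : Type*} {l : Filter α} {f : α → ℂ} {k : α → ℝ}
    (hre : (fun x ↦ (f x).re) =O[l] k) (him : (fun x ↦ (f x).im) =O[l] k) : f =O[l] k := by
  have h : (fun x ↦ ((f x).re : ℂ) + (f x).im * Complex.I) =O[l] k :=
    (Complex.isBigO_ofReal_left.2 hre).add <| by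
      simpa [mul_comm] using (Complex.isBigO_ofReal_left.2 him).const_mul_left Complex.I
  simpa only [Complex.re_add_im] using h

include hp in
lemma isBigO_velocity_sub (hz : z ≠ 0) :
    (fun p ↦ complexField (velocity ((Complex.normSq z * p.1 ^ 3)⁻¹ •
        wave (waveCovector z) p.1 p.2.1 ha η)) p.2.2 -
      (deriv^[3] a (p.1 * waveCovector z p.2.2 + p.2.1) * η p.2.2) • z) =O[waveFilter (Vec 2)]
      fun p ↦ p.1⁻¹ := by
  have hR (i j k : Fin 2) : (fun p ↦ (p.1 ^ 3)⁻¹ * partialDeriv i (partialDeriv j (partialDeriv k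
      (wave (waveCovector z) p.1 p.2.1 ha η))) p.2.2 -
      (∏ m, waveCovector z (![Pi.single i (1 : ℝ), Pi.single j 1, Pi.single k 1] m)) *
        (deriv^[3] a (p.1 * waveCovector z p.2.2 + p.2.1) * η p.2.2))
      =O[waveFilter (Vec 2)] fun p ↦ p.1⁻¹ :=
    isBigO_iteratedLineDerivOp_wave_sub (waveCovector z) ha hp η
      ![Pi.single i (1 : ℝ), Pi.single j 1, Pi.single k 1]
  obtain ⟨q, hq⟩ : ∃ q, q = Complex.normSq z := ⟨_, rfl⟩
  have hq0 : q ≠ 0 := hq ▸ (Complex.normSq_pos.2 hz).ne'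
  rw [← hq]
  rw [Complex.normSq_apply] at hq
  refine isBigO_of_isBigO_re_im
    ((((hR 1 0 0).add (hR 1 1 1)).const_mul_left (-q⁻¹)).congr' ?_ .rfl)
    ((((hR 0 0 0).add (hR 0 1 1)).const_mul_left q⁻¹).congr' ?_ .rfl) <;>
  · filter_upwards [eventually_waveFilter_pos] with p hN
    simp only [complexField_re, complexField_im, Complex.sub_re, Complex.sub_im, Complex.smul_re,
      Complex.smul_im, velocity, laplacian, map_smul, map_add, add_apply, neg_apply, smul_apply,
      smul_eq_mul, Fin.prod_univ_three, Matrix.cons_val, waveCovector_single_zero,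
      waveCovector_single_one]
    field_simp
    rw [hq]
    ring

include hp in
lemma isBigO_stress_sub (μ : ℝ) :
    (fun p ↦ complexField (stress ((2 * μ / p.1 ^ 2) •
        wave (waveCovector z) p.1 p.2.1 ha η)) p.2.2 -
      (deriv^[2] a (p.1 * waveCovector z p.2.2 + p.2.1) * η p.2.2) • (μ * z ^ 2))
        =O[waveFilter (Vec 2)] fun p ↦ p.1⁻¹ := by
  have hR (i j : Fin 2) : (fun p ↦ (p.1 ^ 2)⁻¹ * partialDeriv i (partialDeriv j
      (wave (waveCovector z) p.1 p.2.1 ha η)) p.2.2 -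
      (∏ m, waveCovector z (![Pi.single i (1 : ℝ), Pi.single j 1] m)) *
      (deriv^[2] a (p.1 * waveCovector z p.2.2 + p.2.1) * η p.2.2))
      =O[waveFilter (Vec 2)] fun p ↦ p.1⁻¹ :=
    isBigO_iteratedLineDerivOp_wave_sub (waveCovector z) ha hp η
      ![Pi.single i (1 : ℝ), Pi.single j 1]
  refine isBigO_of_isBigO_re_im
    ((((hR 1 1).sub (hR 0 0)).const_mul_left μ).congr' ?_ .rfl)
    (((hR 0 1).const_mul_left (-2 * μ)).congr' ?_ .rfl) <;>
  · filter_upwards [eventually_waveFilter_pos] with p hN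
    simp only [complexField_re, complexField_im, Complex.sub_re, Complex.sub_im, Complex.smul_re,
      Complex.smul_im, Complex.ofReal_re, Complex.ofReal_im, pow_two, Complex.mul_re,
      Complex.mul_im, stress, map_smul, neg_apply, sub_apply, smul_apply, smul_eq_mul,
      Fin.prod_univ_two, Matrix.cons_val, waveCovector_single_zero, waveCovector_single_one]
    field_simp
    ring

include hp in
lemma isBigO_lowerStress (B : Mat 2) (ℓ : Vec 2 →L[ℝ] ℝ) (c : ℝ) :
    (fun p ↦ complexField (lowerStress B ((c * p.1 ^ 3)⁻¹ • wave ℓ p.1 p.2.1 ha η)) p.2.2)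
      =O[waveFilter (Vec 2)] fun p ↦ p.1⁻¹ := by
  have hR (i j : Fin 2) : (fun p ↦ p.1⁻¹ * ((p.1 ^ 2)⁻¹ *
      partialDeriv i (partialDeriv j (wave ℓ p.1 p.2.1 ha η)) p.2.2)) =O[waveFilter (Vec 2)]
      fun p ↦ p.1⁻¹ := by
    simpa using! (isBigO_refl (fun p : ℝ × ℝ × Vec 2 ↦ p.1⁻¹) (waveFilter (Vec 2))).mul
      (isBigO_iteratedLineDerivOp_wave ℓ ha hp η ![Pi.single i (1 : ℝ), Pi.single j 1])
  refine isBigO_of_isBigO_re_im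
    ((((((hR 0 0).add (hR 1 1)).const_mul_left ((B 0 1 + B 1 0) / 2)).sub
      ((hR 0 1).const_mul_left (B 0 0 + B 1 1))).const_mul_left c⁻¹).congr_left fun p ↦ ?_)
    (((((hR 0 0).const_mul_left (B 1 1)).sub
      ((hR 1 1).const_mul_left (B 0 0))).const_mul_left c⁻¹).congr_left fun p ↦ ?_) <;>
  · simp only [complexField_re, complexField_im, lowerStress, laplacian, map_smul, smul_add,
      add_apply, sub_apply, smul_apply, smul_eq_mul, mul_inv_rev]
    ring

theorem hasPlaneWaves_perturbations (B : Mat 2) {σ : ℂ × ℂ} (hσ : σ ∈ cLam) :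
    HasPlaneWaves (perturbations B) σ := by
  obtain ⟨μ, hμ⟩ := exists_snd_eq_mul_sq_of_mem_cLam hσ
  refine ⟨waveCovector σ.1, fun h hs hp h0 η ↦ ?_⟩
  obtain ⟨H, hH, hHp, rfl⟩ := exists_periodic_iterated_primitive hs hp h0 3
  have hH' : ContDiff ℝ ∞ (deriv H) := hH.iterate_deriv 1
  have hvel := isBigO_velocity_sub hH hHp η hσ.1
  have hstr := isBigO_stress_sub hH' (periodic_deriv hHp) η (z := σ.1) μ
  have hlow := isBigO_lowerStress hH hHp η B (waveCovector σ.1) (Complex.normSq σ.1)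
  obtain ⟨C, hC⟩ := isBigO_principal.1 ((hvel.prod_left hstr).prod_left hlow)
  refine ⟨C, fun N hN s ↦ ⟨_, ⟨((Complex.normSq σ.1 * N ^ 3)⁻¹ • wave (waveCovector σ.1) N s hH η,
    (2 * μ / N ^ 2) • wave (waveCovector σ.1) N s hH' η), rfl⟩, fun x ↦ ?_⟩⟩
  have hb := hC (N, s, x) hN
  rw [← hμ, Real.norm_of_nonneg (by positivity), ← div_eq_mul_inv, Prod.norm_mk, max_le_iff] at hb
  refine ⟨hb.1, ?_⟩
  rw [perturbation_snd_apply, Prod.norm_mk, norm_zero]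
  exact max_le ((norm_nonneg _).trans hb.2) hb.2

end EulerPlaneWaves

section LaminationHull

/-- A set is lamination convex with respect to the cone `L` if it contains the segments in
directions of `L` between its points. -/
def IsLamConvex (L A : Set (ℂ × ℂ)) : Prop :=
  ∀ ⦃ξ⦄, ξ ∈ A → ∀ ⦃ξ'⦄, ξ' ∈ A → ξ - ξ' ∈ L → segment ℝ ξ ξ' ⊆ A

variable {L S A : Set (ℂ × ℂ)}

lemma isOpen_lamIter (hS : IsOpen S) (n : ℕ) : IsOpen (lamIter L S n) := by
  induction n with
  | zero => exact hS
  | succ n ih =>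
    refine ih.union ?_
    have hunion : {p | ∃ ξ ξ' : ℂ × ℂ, ∃ t : ℝ, ξ ∈ lamIter L S n ∧ ξ' ∈ lamIter L S n ∧
        ξ - ξ' ∈ L ∧ t ∈ Icc (0 : ℝ) 1 ∧ p = t • ξ + (1 - t) • ξ'} =
        ⋃ v ∈ L, ⋃ t ∈ Icc (0 : ℝ) 1,
          (· + (1 - t) • v) ⁻¹' lamIter L S n ∩ (· - t • v) ⁻¹' lamIter L S n := by
      ext p
      simp only [mem_ofPred_eq, mem_iUnion, mem_inter_iff, mem_preimage, exists_prop]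
      constructor
      · rintro ⟨ξ, ξ', t, hξ, hξ', hL, ht, rfl⟩
        refine ⟨ξ - ξ', hL, t, ht, ?_, ?_⟩
        · convert hξ using 1; module
        · convert hξ' using 1; module
      · rintro ⟨v, hv, t, ht, h₁, h₂⟩
        exact ⟨_, _, t, h₁, h₂, by convert hv using 1; module, ht, by module⟩
    rw [hunion]
    exact isOpen_biUnion fun v _ ↦ isOpen_biUnion fun t _ ↦
      (ih.preimage (by fun_prop)).inter (ih.preimage (by fun_prop))

lemma isOpen_lamHull (hS : IsOpen S) : IsOpen (lamHull L S) :=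
  isOpen_iUnion (isOpen_lamIter hS)

lemma subset_lamHull : S ⊆ lamHull L S :=
  subset_iUnion (lamIter L S) 0

lemma isLamConvex_lamHull : IsLamConvex L (lamHull L S) := by
  have hmono : Monotone (lamIter L S) := monotone_nat_of_le_succ fun _ ↦ subset_union_left
  rintro ξ hξ ξ' hξ' hL _ ⟨a, b, ha, hb, hab, rfl⟩
  obtain ⟨m, hm⟩ := mem_iUnion.1 hξ
  obtain ⟨n, hn⟩ := mem_iUnion.1 hξ'
  exact mem_iUnion.2 ⟨max m n + 1, Or.inr ⟨ξ, ξ', a, hmono (le_max_left m n) hm,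
    hmono (le_max_right m n) hn, hL, ⟨ha, by linarith⟩, by rw [← hab, add_sub_cancel_left]⟩⟩

lemma IsLamConvex.lamHull_subset (hA : IsLamConvex L A) (hSA : S ⊆ A) : lamHull L S ⊆ A := by
  refine iUnion_subset fun n ↦ ?_
  induction n with
  | zero => exact hSA
  | succ n ih =>
    refine union_subset ih ?_
    rintro _ ⟨ξ, ξ', t, hξ, hξ', hL, ht, rfl⟩
    exact hA (ih hξ) (ih hξ') hL ⟨t, 1 - t, ht.1, sub_nonneg.2 ht.2, add_sub_cancel _ _, rfl⟩

end LaminationHull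

section PhaseRotation

/-- The action `(z, ζ) ↦ (u z, u² ζ)` of the unit circle, which expresses rotations of `ℝ²` in the
complex coordinates. -/
def phaseRotation : Circle →* (ℂ × ℂ →ₗᵢ[ℝ] ℂ × ℂ) where
  toFun u :=
    { toFun := fun p ↦ (u * p.1, u ^ 2 * p.2)
      map_add' := fun p q ↦ by simp [mul_add]
      map_smul' := fun t p ↦ by simp [mul_left_comm]
      norm_map' := fun p ↦ by simp [Prod.norm_def, Circle.norm_coe] }
  map_one' := by ext <;> simp
  map_mul' u v := by ext <;> simp [mul_pow, mul_assoc]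

lemma phaseRotation_apply (u : Circle) (p : ℂ × ℂ) :
    phaseRotation u p = (u * p.1, u ^ 2 * p.2) :=
  rfl

lemma phaseRotation_inv_apply_self (u : Circle) (p : ℂ × ℂ) :
    phaseRotation u⁻¹ (phaseRotation u p) = p := by
  rw [← Function.comp_apply (f := phaseRotation u⁻¹), ← LinearIsometry.coe_mul, ← map_mul,
    inv_mul_cancel, map_one, LinearIsometry.coe_one, id]

lemma phaseRotation_quarter (u : Circle) (z : ℂ) (c : ℝ) :
    phaseRotation (u * Circle.exp (Real.pi / 2)) (z, c) =
      phaseRotation u (Complex.I * z, (-c : ℝ)) := by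
  have hI : (Circle.exp (Real.pi / 2) : ℂ) = Complex.I := by
    simp [Circle.coe_exp, Complex.exp_pi_div_two_mul_I]
  simp [phaseRotation_apply, hI]

lemma phaseRotation_mem_cLam_iff (u : Circle) (p : ℂ × ℂ) :
    phaseRotation u p ∈ cLam ↔ p ∈ cLam := by
  have hu : (u : ℂ) ^ 2 * (starRingEnd ℂ) ((u : ℂ) ^ 2) = 1 := by
    rw [Complex.mul_conj, Complex.normSq_eq_norm_sq]
    simp [Circle.norm_coe]
  have hinv : (u * p.1) ^ 2 * (starRingEnd ℂ) ((u : ℂ) ^ 2 * p.2) =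
      p.1 ^ 2 * (starRingEnd ℂ) p.2 := by
    rw [map_mul]
    linear_combination p.1 ^ 2 * (starRingEnd ℂ) p.2 * hu
  simp only [cLam, phaseRotation_apply, mem_ofPred_eq, hinv, ne_eq, mul_eq_zero, Circle.coe_ne_zero,
    false_or]

/-- The states with real second component all of whose rotations lie in `A`. -/
def realSlice (A : Set (ℂ × ℂ)) : Set (ℂ × ℝ) :=
  {p | ∀ u, phaseRotation u (p.1, p.2) ∈ A}

variable {A : Set (ℂ × ℂ)} {z z' : ℂ} {a b c c' h r : ℝ}

lemma I_mul_mem_realSlice (hz : (z, c) ∈ realSlice A) : (Complex.I * z, -c) ∈ realSlice A :=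
  fun u ↦ phaseRotation_quarter u z c ▸ hz _

lemma neg_mem_realSlice (hz : (z, c) ∈ realSlice A) : (-z, c) ∈ realSlice A := by
  simpa [← mul_assoc] using I_mul_mem_realSlice (I_mul_mem_realSlice hz)

lemma IsLamConvex.segment_subset_realSlice (hA : IsLamConvex cLam A) {p q : ℂ × ℝ}
    (hp : p ∈ realSlice A) (hq : q ∈ realSlice A) (hne : p.1 ≠ q.1)
    (him : ((p.1 - q.1) ^ 2).im * (p.2 - q.2) = 0) : segment ℝ p q ⊆ realSlice A := by
  rintro _ ⟨s, t, hs, ht, hst, rfl⟩ u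
  refine hA (hp u) (hq u) ?_ ⟨s, t, hs, ht, hst, ?_⟩
  · rw [← map_sub, phaseRotation_mem_cLam_iff]
    refine ⟨sub_ne_zero.2 hne, ?_⟩
    rwa [Prod.mk_sub_mk, ← Complex.ofReal_sub, Complex.conj_ofReal, Complex.im_mul_ofReal]
  · simp [← map_smul, ← map_add]

lemma IsLamConvex.convex_realSlice (hA : IsLamConvex cLam A) (c : ℝ) :
    Convex ℝ {z | (z, c) ∈ realSlice A} := by
  refine convex_iff_segment_subset.2 fun z hz z' hz' ↦ ?_
  rcases eq_or_ne z z' with rfl | hne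
  · simpa using hz
  rintro _ ⟨s, t, hs, ht, hst, rfl⟩
  refine hA.segment_subset_realSlice hz hz' hne (by simp) ⟨s, t, hs, ht, hst, ?_⟩
  simp [← add_mul, hst]

lemma IsLamConvex.ofReal_mem_realSlice_of_abs_le (hA : IsLamConvex cLam A)
    (hb : ((b : ℂ), c) ∈ realSlice A) (hab : |a| ≤ b) : ((a : ℂ), c) ∈ realSlice A := by
  obtain ⟨s, t, hs, ht, hst, hab⟩ : a ∈ segment ℝ (-b) b := by
    rw [segment_eq_Icc (by linarith [abs_nonneg a])]
    exact abs_le.1 hab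
  convert hA.convex_realSlice c (neg_mem_realSlice hb) hb hs ht hst
  simp [← hab]

lemma IsLamConvex.mem_realSlice_of_corner (hA : IsLamConvex cLam A) (hr : 0 < r)
    (hh : (((2 * h / √r : ℝ) : ℂ), h) ∈ realSlice A) (hc : |c| < h) (ha : √r * |a| ≤ h + c) :
    ((a : ℂ), c) ∈ realSlice A := by
  have hs : 0 < √r := Real.sqrt_pos.2 hr
  have hpos : 0 < h := (abs_nonneg c).trans_lt hc
  have hzero : ((0 : ℂ), -h) ∈ realSlice A := by
    have h0 : |(0 : ℝ)| ≤ 2 * h / √r := by rw [abs_zero]; positivity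
    simpa using I_mul_mem_realSlice (hA.ofReal_mem_realSlice_of_abs_le hh h0)
  have hne : ((2 * h / √r : ℝ) : ℂ) ≠ 0 := Complex.ofReal_ne_zero.2 (by positivity)
  obtain ⟨hc₁, hc₂⟩ := abs_lt.1 hc
  have hmem : ((((h + c) / √r : ℝ) : ℂ), c) ∈ realSlice A := by
    refine hA.segment_subset_realSlice hh hzero hne ?_
      ⟨(h + c) / (2 * h), (h - c) / (2 * h), div_nonneg (by linarith) (by linarith),
        div_nonneg (by linarith) (by linarith), by field_simp; ring, ?_⟩
    · rw [sub_zero, ← Complex.ofReal_pow, Complex.ofReal_im, zero_mul]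
    · ext1
      · simp only [Prod.fst_add, Prod.smul_fst, smul_zero, add_zero, Complex.real_smul]
        rw [← Complex.ofReal_mul]
        congr 1
        field_simp
      · simp only [Prod.snd_add, Prod.smul_snd, smul_eq_mul]
        field_simp
        ring
  exact hA.ofReal_mem_realSlice_of_abs_le hmem ((le_div_iff₀' hs).2 ha)

variable (hA : IsLamConvex cLam A) (hr : 0 < r)
  (hcorner : ∃ᶠ h in 𝓝[<] (r / 2), (((2 * h / √r : ℝ) : ℂ), h) ∈ realSlice A)
include hA hr hcorner

lemma IsLamConvex.ofReal_mem_realSlice (hc : |c| < r / 2) (ha : √r * |a| < r / 2 + c) :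
    ((a : ℂ), c) ∈ realSlice A := by
  have hnear : ∀ᶠ h in 𝓝[<] (r / 2), |c| < h ∧ √r * |a| - c < h :=
    mem_of_superset (Ioo_mem_nhdsLT (max_lt hc (sub_lt_iff_lt_add.2 ha)))
      fun h hh ↦ max_lt_iff.1 hh.1
  obtain ⟨h, hh, hch, hah⟩ := (hcorner.and_eventually hnear).exists
  exact hA.mem_realSlice_of_corner hr hh hch (sub_le_iff_le_add.1 hah.le)

lemma IsLamConvex.I_mul_ofReal_mem_realSlice (hc : |c| < r / 2) (hb : √r * |b| < r / 2 - c) :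
    (Complex.I * b, c) ∈ realSlice A := by
  simpa using I_mul_mem_realSlice
    (hA.ofReal_mem_realSlice hr hcorner (a := b) (c := -c) (by rwa [abs_neg])
      (by rwa [← sub_eq_add_neg]))

lemma IsLamConvex.mem_realSlice_of_fr_lt_one (hc : |c| < r / 2) (hz : fr r z c < 1) :
    (z, c) ∈ realSlice A := by
  obtain ⟨hc₁, hc₂⟩ := abs_lt.1 hc
  have hp : 0 < r / 2 + c := by linarith
  have hm : 0 < r / 2 - c := by linarith
  set x := √r * |z.re| / (r / 2 + c)
  set y := √r * |z.im| / (r / 2 - c)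
  have hxy : x + y < 1 := hz
  have hx0 : 0 ≤ x := by positivity
  have hy0 : 0 ≤ y := by positivity
  obtain ⟨s, hxs, hsy⟩ : ∃ s, x < s ∧ s < 1 - y := exists_between (by linarith)
  have hs : 0 < s := by linarith
  have ht : 0 < 1 - s := by linarith
  have hre : √r * |z.re / s| < r / 2 + c := by
    rw [abs_div, abs_of_pos hs, ← mul_div_assoc, div_lt_comm₀ hs hp]
    exact hxs
  have him : √r * |z.im / (1 - s)| < r / 2 - c := by
    rw [abs_div, abs_of_pos ht, ← mul_div_assoc, div_lt_comm₀ ht hm]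
    linarith
  have hcomb := hA.convex_realSlice c (hA.ofReal_mem_realSlice hr hcorner hc hre)
    (hA.I_mul_ofReal_mem_realSlice hr hcorner hc him) hs.le ht.le (add_sub_cancel s 1)
  have hdecomp : z = s • ((z.re / s : ℝ) : ℂ) +
      (1 - s) • (Complex.I * ((z.im / (1 - s) : ℝ) : ℂ)) := by
    apply Complex.ext <;> simp [-Complex.ofReal_div, mul_div_cancel₀, hs.ne', ht.ne']
  rw [hdecomp]
  exact hcomb

end PhaseRotation

section RelaxedSet

variable {r r' : ℝ} {p : ℂ × ℂ} {A : Set (ℂ × ℂ)}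

lemma mem_Vset_iff : p ∈ Vset r ↔ ∃ (u : Circle) (z : ℂ) (c : ℝ),
    fr r z c < 1 ∧ 0 < |c| ∧ |c| < r / 2 ∧ p = phaseRotation u (z, c) := by
  have hexp (θ : ℝ) (z : ℂ) (c : ℝ) : phaseRotation (Circle.exp θ) (z, c) =
      (z * Complex.exp (θ * Complex.I), (c : ℂ) * Complex.exp (2 * θ * Complex.I)) := by
    rw [phaseRotation_apply, Circle.coe_exp, ← Complex.exp_nat_mul]
    ring_nf
  constructor
  · rintro ⟨z, c, θ, hz, h0, hc, rfl⟩
    exact ⟨Circle.exp θ, z, c, hz, h0, hc, (hexp θ z c).symm⟩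
  · rintro ⟨u, z, c, hz, h0, hc, rfl⟩
    exact ⟨z, c, Complex.arg u, hz, h0, hc, by rw [← hexp, Circle.exp_arg]⟩

lemma phaseRotation_mem_Vset (u : Circle) (hp : p ∈ Vset r) : phaseRotation u p ∈ Vset r := by
  obtain ⟨v, z, c, hz, h0, hc, rfl⟩ := mem_Vset_iff.1 hp
  exact mem_Vset_iff.2 ⟨u * v, z, c, hz, h0, hc, by rw [map_mul]; rfl⟩

/-- The constraint set `K_r` in complex coordinates. -/
def constraintCircle (r : ℝ) : Set (ℂ × ℂ) :=
  range fun u ↦ phaseRotation u ((√r : ℂ), (r / 2 : ℂ))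

lemma fr_corner_lt_one (hr : 0 < r) {h : ℝ} (h0 : 0 < h) (hh : h < r / 2) :
    fr r ((2 * h / √r : ℝ) : ℂ) h < 1 := by
  have hs : 0 < √r := Real.sqrt_pos.2 hr
  have hcancel : √r * |2 * h / √r| = 2 * h := by
    rw [abs_of_pos (by positivity), mul_div_cancel₀ _ hs.ne']
  simp only [fr, Complex.ofReal_re, Complex.ofReal_im, hcancel, abs_zero, mul_zero, zero_div,
    add_zero]
  rw [div_lt_one (by linarith)]
  linarith

lemma tendsto_corner (r : ℝ) : Tendsto (fun h : ℝ ↦ (((2 * h / √r : ℝ) : ℂ), (h : ℂ)))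
    (𝓝[<] (r / 2)) (𝓝 ((√r : ℂ), (r / 2 : ℂ))) := by
  have hcont : Continuous fun h : ℝ ↦ (((2 * h / √r : ℝ) : ℂ), (h : ℂ)) := by fun_prop
  convert hcont.continuousWithinAt.tendsto using 2
  simp [mul_div_cancel₀, Real.div_sqrt]

lemma lamHull_Vset_subset (hr : 0 < r) {ε : ℝ} (hε : 0 < ε) (hA : IsLamConvex cLam A)
    (hnear : Vset r ∩ thickening ε (constraintCircle r) ⊆ A) : lamHull cLam (Vset r) ⊆ A := by
  have hclose : ∀ᶠ h in 𝓝[<] (r / 2), h ∈ Ioo 0 (r / 2) ∧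
      dist (((2 * h / √r : ℝ) : ℂ), (h : ℂ)) ((√r : ℂ), (r / 2 : ℂ)) < ε :=
    (eventually_mem_set.2 (Ioo_mem_nhdsLT (half_pos hr))).and
      ((tendsto_corner r).eventually (ball_mem_nhds _ hε))
  have hcorner : ∀ᶠ h in 𝓝[<] (r / 2), (((2 * h / √r : ℝ) : ℂ), h) ∈ realSlice A := by
    filter_upwards [hclose] with h ⟨⟨h0, hh⟩, hdist⟩ u
    refine hnear ⟨mem_Vset_iff.2 ⟨u, _, h, fr_corner_lt_one hr h0 hh, ?_⟩, ?_⟩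
    · rw [abs_of_pos h0]
      exact ⟨h0, hh, rfl⟩
    · exact mem_thickening_iff.2 ⟨_, mem_range_self u, by rwa [LinearIsometry.dist_map]⟩
  refine hA.lamHull_subset fun p hp ↦ ?_
  obtain ⟨u, z, c, hz, -, hc, rfl⟩ := mem_Vset_iff.1 hp
  exact hA.mem_realSlice_of_fr_lt_one hr hcorner.frequently hc hz u

lemma constraintCircle_subset_Vset (hr : 0 < r) (hrr' : r < r') : constraintCircle r ⊆ Vset r' := by
  rintro _ ⟨u, rfl⟩
  refine mem_Vset_iff.2 ⟨u, √r, r / 2, ?_, ?_⟩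
  · have hlt : √r < √r' := Real.sqrt_lt_sqrt hr.le hrr'
    have h₁ := Real.sq_sqrt hr.le
    have h₂ := Real.sq_sqrt (hr.trans hrr').le
    simp only [fr, Complex.ofReal_re, Complex.ofReal_im, abs_zero, mul_zero, zero_div, add_zero,
      abs_of_nonneg (Real.sqrt_nonneg r)]
    rw [div_lt_one (by linarith)]
    nlinarith [sq_pos_of_pos (sub_pos.2 hlt)]
  · rw [abs_of_pos (half_pos hr)]
    exact ⟨half_pos hr, by linarith, by simp⟩

lemma exists_pos_of_mem_Vset (hp : p ∈ Vset r) : ∃ (u : Circle) (z : ℂ) (c : ℝ),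
    fr r z c < 1 ∧ 0 < c ∧ c < r / 2 ∧ p = phaseRotation u (z, c) := by
  obtain ⟨u, z, c, hz, h0, hc, rfl⟩ := mem_Vset_iff.1 hp
  rcases lt_or_gt_of_ne (abs_pos.1 h0) with hneg | hpos
  · rw [abs_of_neg hneg] at hc
    refine ⟨u * Circle.exp (Real.pi / 2), -Complex.I * z, -c, ?_, neg_pos.2 hneg, hc, ?_⟩
    · simpa [fr, ← sub_eq_add_neg, add_comm (√r * |z.re| / _)] using hz
    · rw [phaseRotation_quarter, ← mul_assoc]
      simp
  · rw [abs_of_pos hpos] at hc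
    exact ⟨u, z, c, hz, hpos, hc, rfl⟩

lemma eq_phaseRotation_arg (z ζ : ℂ) : (z, ζ) = phaseRotation (Circle.exp (ζ.arg / 2))
    (((Circle.exp (ζ.arg / 2))⁻¹ : Circle) * z, (‖ζ‖ : ℂ)) := by
  rw [phaseRotation_apply, Circle.coe_exp, ← Complex.exp_nat_mul]
  ext1
  · simp
  · nth_rw 1 [← Complex.norm_mul_exp_arg_mul_I ζ, mul_comm]
    push_cast
    ring_nf

lemma tendsto_unrotate_arg {z : ℂ} {c : ℝ} (h0 : 0 < c) :
    Tendsto (fun p : ℂ × ℂ ↦ (((Circle.exp (p.2.arg / 2))⁻¹ : Circle) * p.1, ‖p.2‖))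
      (𝓝 (z, (c : ℂ))) (𝓝 (z, c)) := by
  have harg : ContinuousAt (fun p : ℂ × ℂ ↦ p.2.arg) (z, (c : ℂ)) :=
    ContinuousAt.comp (g := Complex.arg)
      (Complex.continuousAt_arg (Complex.ofReal_mem_slitPlane.2 h0)) continuousAt_snd
  have hphase : ContinuousAt (fun p : ℂ × ℂ ↦ (((Circle.exp (p.2.arg / 2))⁻¹ : Circle) : ℂ))
      (z, (c : ℂ)) :=
    ContinuousAt.comp (g := fun x : ℝ ↦ (((Circle.exp (x / 2))⁻¹ : Circle) : ℂ)) (by fun_prop) harg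
  have hcont : ContinuousAt
      (fun p : ℂ × ℂ ↦ ((((Circle.exp (p.2.arg / 2))⁻¹ : Circle) : ℂ) * p.1, ‖p.2‖))
      (z, (c : ℂ)) :=
    (hphase.mul continuousAt_fst).prodMk (by fun_prop)
  simpa [ContinuousAt, Complex.arg_ofReal_of_nonneg h0.le, abs_of_pos h0] using hcont

lemma continuousAt_fr {z : ℂ} {c : ℝ} (hp : r / 2 + c ≠ 0) (hm : r / 2 - c ≠ 0) :
    ContinuousAt (fun q : ℂ × ℝ ↦ fr r q.1 q.2) (z, c) := by
  unfold fr
  fun_prop (disch := assumption)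

lemma Vset_mem_nhds {z : ℂ} {c : ℝ} (hz : fr r z c < 1) (h0 : 0 < c) (hc : c < r / 2) :
    Vset r ∈ 𝓝 (z, (c : ℂ)) := by
  have hnear : ∀ᶠ q : ℂ × ℝ in 𝓝 (z, c), fr r q.1 q.2 < 1 ∧ q.2 ∈ Ioo 0 (r / 2) :=
    ((continuousAt_fr (by linarith) (by linarith)).eventually_lt_const hz).and
      (continuousAt_snd.eventually_mem (Ioo_mem_nhds h0 hc))
  filter_upwards [(tendsto_unrotate_arg h0).eventually hnear] with p ⟨hp, hpos, hlt⟩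
  rw [← abs_norm] at hpos hlt
  exact mem_Vset_iff.2 ⟨_, _, ‖p.2‖, hp, hpos, hlt, eq_phaseRotation_arg p.1 p.2⟩

lemma isOpen_Vset (r : ℝ) : IsOpen (Vset r) := by
  refine isOpen_iff_mem_nhds.2 fun p hp ↦ ?_
  obtain ⟨u, z, c, hz, h0, hc, rfl⟩ := exists_pos_of_mem_Vset hp
  have hback : (phaseRotation u⁻¹) ⁻¹' Vset r ∈ 𝓝 (phaseRotation u ((z : ℂ), (c : ℂ))) := by
    refine (phaseRotation u⁻¹).continuous.continuousAt.preimage_mem_nhds ?_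
    rw [phaseRotation_inv_apply_self]
    exact Vset_mem_nhds hz h0 hc
  filter_upwards [hback] with q hq
  rw [← phaseRotation_inv_apply_self u⁻¹ q]
  exact phaseRotation_mem_Vset _ hq

end RelaxedSet

section RealCoordinates

variable {r r' : ℝ}

/-- The identification `toC` as a linear equivalence. -/
def complexCoordinates : (Vec 2 × S0 2) ≃ₗ[ℝ] ℂ × ℂ where
  toFun := toC
  map_add' w w' := by ext1 <;> simp [toC] <;> ring
  map_smul' c w := by ext1 <;> simp [toC] <;> ring
  invFun p := (![p.1.re, p.1.im], ⟨![![p.2.re, p.2.im], ![p.2.im, -p.2.re]],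
    fun i j ↦ by fin_cases i <;> fin_cases j <;> rfl, by simp [Fin.sum_univ_two]⟩)
  left_inv w := by
    have h := w.2.2.2
    have h' := w.2.2.1 0 1
    rw [Fin.sum_univ_two] at h
    ext i j
    · fin_cases i <;> simp [toC]
    · fin_cases i <;> fin_cases j <;> simp [toC] <;> linarith
  right_inv p := by ext <;> simp [toC]

lemma norm_le_norm_complexCoordinates (w : Vec 2 × S0 2) : ‖w‖ ≤ ‖complexCoordinates w‖ := by
  obtain ⟨p, rfl⟩ := complexCoordinates.symm.surjective w
  rw [LinearEquiv.apply_symm_apply]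
  have h₁ := norm_fst_le p
  have h₂ := norm_snd_le p
  have := (Complex.abs_re_le_norm p.1).trans h₁
  have := (Complex.abs_im_le_norm p.1).trans h₁
  have := (Complex.abs_re_le_norm p.2).trans h₂
  have := (Complex.abs_im_le_norm p.2).trans h₂
  refine max_le ((pi_norm_le_iff_of_nonneg (norm_nonneg p)).2 fun i ↦ ?_)
    ((pi_norm_le_iff_of_nonneg (norm_nonneg p)).2 fun i ↦
      (pi_norm_le_iff_of_nonneg (norm_nonneg p)).2 fun j ↦ ?_)
  · fin_cases i <;> simpa [complexCoordinates]
  · fin_cases i <;> fin_cases j <;> simpa [complexCoordinates]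

lemma norm_toC_sq_le (w : Vec 2 × S0 2) :
    ‖toC w‖ ^ 2 ≤ ∑ i, w.1 i ^ 2 + ∑ i, ∑ j, (w.2 : Mat 2) i j ^ 2 := by
  have hsymm := w.2.2.1 1 0
  have htrace := w.2.2.2
  rw [Fin.sum_univ_two] at htrace
  have hsum : ∑ i, w.1 i ^ 2 + ∑ i, ∑ j, (w.2 : Mat 2) i j ^ 2 =
      ‖(toC w).1‖ ^ 2 + 2 * ‖(toC w).2‖ ^ 2 := by
    simp only [toC, ← Complex.normSq_eq_norm_sq, Complex.normSq_add_mul_I, Fin.sum_univ_two, hsymm,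
      eq_neg_of_add_eq_zero_right htrace]
    ring
  rw [hsum, Prod.norm_def]
  rcases max_choice ‖(toC w).1‖ ‖(toC w).2‖ with h | h <;> rw [h] <;>
    linarith [sq_nonneg ‖(toC w).1‖, sq_nonneg ‖(toC w).2‖]

lemma mem_constraintCircle_iff (hr : 0 < r) {p : ℂ × ℂ} :
    p ∈ constraintCircle r ↔ ‖p.1‖ ^ 2 = r ∧ p.2 = p.1 ^ 2 / 2 := by
  have hs : (√r : ℂ) ^ 2 = r := by exact_mod_cast Real.sq_sqrt hr.le
  have hs0 : (√r : ℂ) ≠ 0 := by exact_mod_cast (Real.sqrt_pos.2 hr).ne'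
  constructor
  · rintro ⟨u, rfl⟩
    simp [phaseRotation_apply, Circle.norm_coe, Real.sq_sqrt hr.le, mul_pow, hs, mul_div_assoc]
  · rintro ⟨h₁, h₂⟩
    have hnorm : ‖p.1‖ = √r := by rw [← h₁, Real.sqrt_sq (norm_nonneg _)]
    obtain ⟨u, hu⟩ : ∃ u : Circle, (u : ℂ) = p.1 / √r :=
      ⟨⟨p.1 / √r, by simp [Submonoid.unitSphere, hnorm, abs_of_pos, Real.sqrt_pos.2 hr,
        (Real.sqrt_pos.2 hr).ne']⟩, rfl⟩
    have hp : phaseRotation u ((√r : ℂ), (r / 2 : ℂ)) = p := by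
      ext1 <;> simp only [phaseRotation_apply, hu, h₂, ← hs] <;> field_simp
    exact ⟨u, hp⟩

lemma toC_mem_constraintCircle_iff (hr : 0 < r) {w : Vec 2 × S0 2} :
    toC w ∈ constraintCircle r ↔ w ∈ Kset 2 r := by
  have hsymm := w.2.2.1 1 0
  have htrace := w.2.2.2
  rw [Fin.sum_univ_two] at htrace
  rw [mem_constraintCircle_iff hr, ← Complex.normSq_eq_norm_sq]
  simp only [toC, Kset, Complex.normSq_add_mul_I, Complex.ext_iff, Fin.forall_fin_two, pow_two,
    Complex.add_re, Complex.ofReal_re, Complex.mul_re, Complex.I_re, mul_zero, Complex.ofReal_im,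
    Complex.I_im, mul_one, sub_self, add_zero, Complex.div_ofNat_re, Complex.add_im,
    Complex.mul_im, zero_add, Complex.div_ofNat_im, Nat.cast_ofNat, ↓reduceIte, zero_ne_one,
    sub_zero, one_ne_zero, mem_ofPred_eq, hsymm]
  grind

lemma infDist_Kset_le (hr : 0 < r) (w : Vec 2 × S0 2) :
    infDist w (Kset 2 r) ≤ infDist (toC w) (constraintCircle r) := by
  refine (le_infDist (range_nonempty _)).2 fun p hp ↦ ?_
  obtain ⟨w', rfl⟩ := complexCoordinates.surjective p
  refine (infDist_le_dist_of_mem ((toC_mem_constraintCircle_iff hr).1 hp)).trans ?_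
  rw [dist_eq_norm, dist_eq_norm]
  exact (norm_le_norm_complexCoordinates _).trans_eq (by rw [map_sub]; rfl)

lemma Kset_subset_Uset (hr : 0 < r) (hrr' : r < r') : Kset 2 r ⊆ Uset r' := fun _ hw ↦
  subset_lamHull (constraintCircle_subset_Vset hr hrr' ((toC_mem_constraintCircle_iff hr).2 hw))

end RealCoordinates

section Conclusion

variable (B : Mat 2) {r : ℝ}

theorem approximable_lamHull (hr : 0 < r) {ε : ℝ} (hε : 0 < ε) {p : ℂ × ℂ}
    (hp : p ∈ lamHull cLam (Vset r)) : Approximable (perturbations B) (lamHull cLam (Vset r))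
      (infDist · (constraintCircle r)) ε p := by
  have hopen : IsOpen (lamHull cLam (Vset r)) := isOpen_lamHull (isOpen_Vset r)
  have hclass := isPerturbationClass_perturbations B
  have hD0 (y : ℂ × ℂ) : 0 ≤ infDist y (constraintCircle r) := infDist_nonneg
  let A : Set (ℂ × ℂ) := {p ∈ lamHull cLam (Vset r) | Approximable (perturbations B)
    (lamHull cLam (Vset r)) (infDist · (constraintCircle r)) ε p}
  have hA : IsLamConvex cLam A := by
    rintro ξ ⟨hξ, hξA⟩ ξ' ⟨hξ', hξA'⟩ hΛ p hp
    have hseg := isLamConvex_lamHull hξ hξ' hΛ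
    refine ⟨hseg hp, ?_⟩
    obtain ⟨t, s, ht, hs, hts, rfl⟩ := hp
    obtain rfl : s = 1 - t := (sub_eq_of_eq_add' hts.symm).symm
    exact hclass.approximable_of_oscillates hopen hD0 (lipschitz_infDist_pt _) hξA hξA'
      (segment_symm ℝ ξ ξ' ▸ hseg) ((hasPlaneWaves_perturbations B hΛ).oscillates hclass)
      ⟨ht, sub_nonneg.1 hs⟩
  refine (lamHull_Vset_subset hr hε hA ?_ hp).2
  rintro ξ ⟨hξ, hnear⟩
  have hξ' := subset_lamHull (L := cLam) hξ
  exact ⟨hξ', approximable_of_mem hopen hε hξ' ((mem_thickening_iff_infDist_lt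
    (range_nonempty _)).1 hnear)⟩

/-- The value at `x` of the perturbation with potentials `φ` and `χ`, in real coordinates. -/
def realPerturbation (φ χ : 𝓓(unitCube 2, ℝ)) (x : Vec 2) : Vec 2 × S0 2 :=
  (fun i ↦ vectorField (velocity φ) i x,
    ⟨_, traceFreeField_mem_S0 (stress χ + lowerStress B φ) x⟩)

lemma toC_realPerturbation (φ χ : 𝓓(unitCube 2, ℝ)) (x : Vec 2) :
    toC (realPerturbation B φ χ x) =
      (perturbation B (φ, χ)).1 x + (perturbation B (φ, χ)).2 x := by
  ext1
  · simp [toC, realPerturbation, perturbation, complexField, vectorField, traceFreeField]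
  · simp [toC, realPerturbation, perturbation, complexField, vectorField, traceFreeField]
    ring

theorem exists_realPerturbation (hr : 0 < r) {w : Vec 2 × S0 2} (hw : w ∈ Uset r) :
    ∃ φ χ : 𝓓(unitCube 2, ℝ), (∀ x ∈ unitSquare, w + realPerturbation B φ χ x ∈ Uset r) ∧
      infDist w (Kset 2 r) ^ 2 / 2 ≤ ∫ x in unitSquare,
        (∑ i, (realPerturbation B φ χ x).1 i ^ 2 +
          ∑ i, ∑ j, ((realPerturbation B φ χ x).2 : Mat 2) i j ^ 2) := by
  have hclass := isPerturbationClass_perturbations B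
  obtain ⟨_, ⟨⟨φ, χ⟩, rfl⟩, hin, henergy⟩ := hclass.exists_energy_of_approximable
    (lipschitz_infDist_pt _) infDist_nonneg fun ε hε ↦ approximable_lamHull B hr hε hw
  refine ⟨φ, χ, fun x hx ↦ ?_, ?_⟩
  · have hadd : toC (w + realPerturbation B φ χ x) = toC w + toC (realPerturbation B φ χ x) :=
      map_add complexCoordinates w _
    rw [Uset, mem_ofPred_eq, hadd, toC_realPerturbation]
    exact hin x (unitCube_subset_halfOpenCube hx)
  · have hF := (hclass.continuous_fst _ ⟨(φ, χ), rfl⟩).add (hclass.continuous_snd _ ⟨(φ, χ), rfl⟩)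
    calc infDist w (Kset 2 r) ^ 2 / 2
      _ ≤ infDist (toC w) (constraintCircle r) ^ 2 / 2 := by
          gcongr
          · exact infDist_nonneg
          · exact infDist_Kset_le hr w
      _ ≤ ∫ x in halfOpenCube 2, ‖(perturbation B (φ, χ)).1 x + (perturbation B (φ, χ)).2 x‖ ^ 2 :=
          henergy
      _ ≤ ∫ x in halfOpenCube 2, (∑ i, (realPerturbation B φ χ x).1 i ^ 2 +
            ∑ i, ∑ j, ((realPerturbation B φ χ x).2 : Mat 2) i j ^ 2) :=
          setIntegral_mono_on (integrableOn_halfOpenCube (hF.norm.pow 2))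
            (integrableOn_halfOpenCube (by unfold realPerturbation; fun_prop))
            measurableSet_halfOpenCube fun x _ ↦ toC_realPerturbation B φ χ x ▸ norm_toC_sq_le _
      _ = _ := setIntegral_congr_set halfOpenCube_ae_eq_unitCube

end Conclusion

end ConvexIntegration

/-- **perturbation property in dimension 2.** Let `d = 2`, `B` a fixed
`2×2` matrix, `r > 0`, `Q = (0,1)²`, and `𝒰_r = 𝒱_r^lc`. Then:
(i) there is a strictly increasing `Φ : [0,∞) → [0,∞)` with `Φ 0 = 0` such that for every
`w̄ ∈ 𝒰_r` there are `w = (v, U) ∈ C_c^∞(Q; ℝ² × S₀^{2×2})` and `q ∈ C_c^∞(Q)` with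
`div U + ∇q = Bv`, `div v = 0` on ℝ², `w̄ + w(x) ∈ 𝒰_r` on `Q`,
`∫_Q |w|² ≥ Φ(dist(w̄, K_r))` and `∫_Q w = 0`;
(ii) `K_r ⊂ 𝒰_{r'}` whenever `r < r'`. -/
theorem stmt17 (B : Mat 2) (r : ℝ) (hr : 0 < r) :
    (∃ Φ : ℝ → ℝ,
      StrictMonoOn Φ (Set.Ici 0) ∧ Φ 0 = 0 ∧ (∀ t ∈ Set.Ici (0 : ℝ), 0 ≤ Φ t) ∧
      ∀ wb ∈ Uset r,
        ∃ (v : Vec 2 → Vec 2) (U : Vec 2 → Mat 2) (q : Vec 2 → ℝ)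
          (hU : ∀ x, U x ∈ S0 2),
          ContDiff ℝ (⊤ : ℕ∞) v ∧
          (∀ i j, ContDiff ℝ (⊤ : ℕ∞) (fun x => U x i j)) ∧
          ContDiff ℝ (⊤ : ℕ∞) q ∧
          HasCompactSupport v ∧ tsupport v ⊆ unitSquare ∧
          HasCompactSupport U ∧ tsupport U ⊆ unitSquare ∧
          HasCompactSupport q ∧ tsupport q ⊆ unitSquare ∧
          -- div U + ∇q = B v and div v = 0 on ℝ²
          (∀ x i, (∑ j, pd j (fun y => U y i j) x) + pd i q x = ∑ j, B i j * v x j) ∧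
          (∀ x, ∑ i, pd i (fun y => v y i) x = 0) ∧
          -- w̄ + w(x) ∈ 𝒰_r on Q
          (∀ x ∈ unitSquare, (wb.1 + v x, wb.2 + (⟨U x, hU x⟩ : S0 2)) ∈ Uset r) ∧
          -- ∫_Q |w|² ≥ Φ(dist(w̄, K_r))
          ((∫ x in unitSquare, ((∑ i, (v x i) ^ 2) + ∑ i, ∑ j, (U x i j) ^ 2))
            ≥ Φ (Metric.infDist wb (Kset 2 r))) ∧
          -- ∫_Q w = 0
          (∀ i, (∫ x in unitSquare, v x i) = 0) ∧
          (∀ i j, (∫ x in unitSquare, U x i j) = 0)) ∧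
    (∀ r' : ℝ, r < r' → Kset 2 r ⊆ Uset r') := by
  open ConvexIntegration in
  refine ⟨⟨fun t ↦ t ^ 2 / 2, fun s hs t _ hst ↦ by
    linarith [pow_lt_pow_left₀ hst hs two_ne_zero], by norm_num, fun t _ ↦ by positivity,
    fun w hw ↦ ?_⟩, fun r' hrr' ↦ Kset_subset_Uset hr hrr'⟩
  obtain ⟨φ, χ, hrelaxed, henergy⟩ := exists_realPerturbation B hr hw
  let V := vectorField (velocity φ)
  let U := traceFreeField (stress χ + lowerStress B φ)
  let q := pressure B φ χ
  obtain ⟨hVc, hVs⟩ := hasCompactSupport_and_tsupport_subset_pi fun i ↦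
    ⟨(V i).hasCompactSupport, (V i).tsupport_subset⟩
  obtain ⟨hUc, hUs⟩ := hasCompactSupport_and_tsupport_subset_pi fun i ↦
    hasCompactSupport_and_tsupport_subset_pi fun j ↦
      ⟨(U i j).hasCompactSupport, (U i j).tsupport_subset⟩
  refine ⟨fun x i ↦ V i x, fun x i j ↦ U i j x, q, traceFreeField_mem_S0 _,
    contDiff_pi.2 fun i ↦ (V i).contDiff, fun i j ↦ (U i j).contDiff, q.contDiff, hVc, hVs, hUc,
    hUs, q.hasCompactSupport, q.tsupport_subset, fun x i ↦ ?_, fun x ↦ ?_, hrelaxed, henergy,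
    fun i ↦ (setIntegral_unitCube _).trans (integral_velocity φ i),
    fun i j ↦ (setIntegral_unitCube _).trans (integral_stress B φ χ i j)⟩
  · simpa [pd_testFunction] using DFunLike.congr_fun (momentum_balance B φ χ i) x
  · simpa [pd_testFunction] using DFunLike.congr_fun (divergence_velocity φ) x
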